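/- arXiv:2510.07405 — 2 statements merged into one kernel-verified Lean document; each statement's English description precedes it below -/
import Mathlib

section
/- Let A be a 2-Calabi-Yau tilted algebra, J = A e_i A, B = A/J. For every Cohen-Macaulay B-module Y there exists a short exact sequence of A-modules 0 → J_X → X → Y → 0 with J_X ∈ add J, X ∈ J^⊥, and J_X → X an add-J approximation of X; in particular F(X) ≅ Y, so the functor F : J^⊥ → CMP B is dense. -/
noncomputable section

open CategoryTheory Opposite DirectSum MulOpposite

/-- An idempotent is primitive if it is nonzero and is not the sum of two nonzero
orthogonal idempotents. -/
def IsPrimitiveIdempotent {A : Type} [Ring A] (a : A) : Prop :=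
  IsIdempotentElem a ∧ a ≠ 0 ∧
    ∀ b c : A, IsIdempotentElem b → IsIdempotentElem c → b * c = 0 → c * b = 0 →
      a = b + c → b = 0 ∨ c = 0

/-- A complete family of orthogonal idempotents. -/
def CompOrthIdem {A ι : Type} [Ring A] [Fintype ι] (e : ι → A) : Prop :=
  (∀ i j, i ≠ j → e i * e j = 0) ∧ (∀ i, IsIdempotentElem (e i)) ∧ (∑ i, e i) = 1

/-- The two-sided ideal `A e A` generated by an idempotent `e`, viewed as a
right `A`-module (i.e. a module over `Aᵐᵒᵖ`): it is the right `A`-submodule of `A`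
spanned by all elements `b * e`. -/
def genIdeal {A : Type} [Ring A] (e : A) : Submodule Aᵐᵒᵖ A :=
  Submodule.span Aᵐᵒᵖ {x | ∃ b : A, x = b * e}

/-- The indecomposable projective right module `e A` at the idempotent `e`. -/
def pIdeal {A : Type} [Ring A] (e : A) : Submodule Aᵐᵒᵖ A :=
  Submodule.span Aᵐᵒᵖ ({e} : Set A)

/-- The radical of a module: the intersection of all maximal submodules.
For a finite dimensional module `M` over a finite dimensional algebra this is `M · rad A`. -/
def radical (R M : Type) [Ring R] [AddCommGroup M] [Module R M] : Submodule R M :=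
  sInf {m | IsCoatom m}

/-- `Ext¹` for right `A`-modules, as a `k`-module. -/
abbrev rext1 (k : Type) [Field k] (A : Type) [Ring A] [Algebra k A]
    (M N : ModuleCat.{0} Aᵐᵒᵖ) : ModuleCat.{0} k :=
  ((Ext k (ModuleCat.{0} Aᵐᵒᵖ) 1).obj (op M)).obj N

/-- A right `A`-module `M` is Cohen-Macaulay if `Ext¹_A(M, A) = 0`. -/
def IsCM (k : Type) [Field k] (A : Type) [Ring A] [Algebra k A]
    (M : ModuleCat.{0} Aᵐᵒᵖ) : Prop :=
  Subsingleton (rext1 k A M (ModuleCat.of Aᵐᵒᵖ A))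

/-- A witness that `B` is a 2-Calabi-Yau tilted algebra: a Hom-finite, idempotent
complete (hence Krull-Schmidt), `k`-linear triangulated 2-Calabi-Yau category `C`
together with a cluster-tilting object `T` such that `B ≅ End_C T`. -/
structure CYTiltedWitness (k : Type) [Field k] (B : Type) [Ring B] [Algebra k B] :
    Type 1 where
  C : Type
  [cat : Category.{0} C]
  [pre : Preadditive C]
  [lin : Linear k C]
  [shift : HasShift C ℤ]
  [zero : Limits.HasZeroObject C]
  [shiftAdd : ∀ n : ℤ, (shiftFunctor C n).Additive]
  [tri : Pretriangulated C]
  [biprod : Limits.HasFiniteBiproducts C]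
  [idem : IsIdempotentComplete C]
  homFinite : ∀ X Y : C, FiniteDimensional k (X ⟶ Y)
  /-- the 2-Calabi-Yau property: a Serre duality `D Hom(X,Y) ≅ Hom(Y, X⟦2⟧)` -/
  serre : ∀ X Y : C, Nonempty ((X ⟶ Y) ≃ₗ[k] Module.Dual k (Y ⟶ X⟦(2:ℤ)⟧))
  T : C
  /-- `T` is cluster-tilting: `add T = {X | Ext¹(T, X) = 0}` -/
  clusterTilting : ∀ X : C, (∀ f : T ⟶ X⟦(1:ℤ)⟧, f = 0) ↔
    ∃ (n : ℕ) (s : X ⟶ ⨁ (fun _ : Fin n => T)) (r : (⨁ (fun _ : Fin n => T)) ⟶ X),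
      s ≫ r = 𝟙 X
  algIso : Nonempty (B ≃ₐ[k] End T)

/-- `B` is a 2-Calabi-Yau tilted algebra. -/
def IsCYTilted (k : Type) [Field k] (B : Type) [Ring B] [Algebra k B] : Prop :=
  Nonempty (CYTiltedWitness k B)

/-- `M` is a module over `B = A/AeA`: the ideal `J = AeA` acts trivially. -/
def JTriv {A : Type} [Ring A] (e : A) (M : Type) [AddCommGroup M]
    [Module Aᵐᵒᵖ M] : Prop :=
  ∀ a ∈ genIdeal e, ∀ m : M, (MulOpposite.op a) • m = 0

/-- `N` belongs to `add J`, i.e. is a direct summand of a finite direct sum of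
copies of `J = AeA`. -/
def InAddJ {A : Type} [Ring A] (e : A) (N : ModuleCat.{0} Aᵐᵒᵖ) : Prop :=
  ∃ (n : ℕ) (s : N →ₗ[Aᵐᵒᵖ] (Fin n → ↥(genIdeal e)))
    (r : (Fin n → ↥(genIdeal e)) →ₗ[Aᵐᵒᵖ] N), r ∘ₗ s = LinearMap.id

/-- `f : J_X → X` is an `add J`-approximation: `J_X ∈ add J` and every map from a
module of `add J` to `X` factors through `f`. -/
def IsAddJApprox {A : Type} [Ring A] (e : A) (JX X : ModuleCat.{0} Aᵐᵒᵖ)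
    (f : JX →ₗ[Aᵐᵒᵖ] X) : Prop :=
  InAddJ e JX ∧ ∀ (Z : ModuleCat.{0} Aᵐᵒᵖ), InAddJ e Z →
    ∀ g : Z →ₗ[Aᵐᵒᵖ] X, ∃ h : Z →ₗ[Aᵐᵒᵖ] JX, f ∘ₗ h = g

/-!
Write `A = End T`, let `S` be the summand of `T` with `e A = Hom(T, S)`, and let `U ⟶ R ⟶ T` be
the start of a triangle on a right `add S`-approximation of `T`.  Then `J = A e A` is the image of
`Hom(T, R) ⟶ Hom(T, T)`, so `Ext¹(J, N) = 0` as soon as every map `Hom(T, U) ⟶ N` extends to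
`Hom(T, R)`.  For `N = A` this holds because `T` is rigid.  For `N = A/J` there are no maps
`Hom(T, U) ⟶ N` at all, since `A/J ≅ Hom(T, U⟦1⟧)` and `U` is rigid.  The same is true for a
Cohen-Macaulay `A/J`-module `N ≅ Hom(T, Z)`: let `T ⟶ L ⟶ V` be the start of a triangle on a left
`add S`-approximation.  An `add T`-resolution of `V⟦1⟧` induces a resolution of `Hom(T, V⟦1⟧)` by
modules in `add (A/J)`, through which every map `N ⟶ Hom(T, V⟦1⟧)` factors because
`Ext¹(N, A/J) = 0`.  Hence `Hom(T, -)` kills every composite `U ⟶ Z ⟶ V⟦1⟧`.  As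
`Hom(Z, S⟦2⟧)` is dual to `Hom(S, Z) = 0`, all maps `Z ⟶ T⟦2⟧` factor through `V⟦1⟧`, and Serre
duality shows that `Hom(T, -)` kills every map `U ⟶ Z`.

Given these vanishing results, the sequence `0 → J_X → X → Y → 0` is the pushout of a free
presentation `0 → K → P → Y → 0` along a left `add J`-approximation `K ⟶ J_X`.  The approximation
property forces `Ext¹(X, J) = 0`, and the remaining vanishing conditions propagate along
`0 → J_X → X → Y → 0` and `0 → J → A → A/J → 0`.
-/

universe w v u

/-! ### Vanishing of first extension groups -/

section Ext

variable {C : Type u} [Category.{v} C] [Abelian C] [HasExt.{w} C] {S : ShortComplex C} {X Y : C}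

lemma subsingleton_ext_X₂_left (hS : S.ShortExact) {n : ℕ}
    (h₁ : Subsingleton (Abelian.Ext S.X₁ Y n)) (h₃ : Subsingleton (Abelian.Ext S.X₃ Y n)) :
    Subsingleton (Abelian.Ext S.X₂ Y n) := by
  refine subsingleton_of_forall_eq 0 fun ξ => ?_
  obtain ⟨ζ, rfl⟩ := Abelian.Ext.contravariant_sequence_exact₂ hS Y ξ (h₁.elim _ _)
  rw [h₃.elim ζ 0, Abelian.Ext.comp_zero]

lemma subsingleton_ext_X₂_right (hS : S.ShortExact) {n : ℕ}
    (h₁ : Subsingleton (Abelian.Ext X S.X₁ n)) (h₃ : Subsingleton (Abelian.Ext X S.X₃ n)) :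
    Subsingleton (Abelian.Ext X S.X₂ n) := by
  refine subsingleton_of_forall_eq 0 fun ξ => ?_
  obtain ⟨ζ, rfl⟩ := Abelian.Ext.covariant_sequence_exact₂ X hS ξ (h₃.elim _ _)
  rw [h₁.elim ζ 0, Abelian.Ext.zero_comp]

lemma subsingleton_ext_one_X₁_right (hS : S.ShortExact) (h₃ : Subsingleton (X ⟶ S.X₃))
    (h₂ : Subsingleton (Abelian.Ext X S.X₂ 1)) : Subsingleton (Abelian.Ext X S.X₁ 1) := by
  refine subsingleton_of_forall_eq 0 fun ξ => ?_
  obtain ⟨ζ, rfl⟩ :=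
    Abelian.Ext.covariant_sequence_exact₁ X hS ξ (h₂.elim _ _) (zero_add 1)
  rw [← Abelian.Ext.mk₀_homEquiv₀_apply ζ, h₃.elim (Abelian.Ext.homEquiv₀ ζ) 0,
    Abelian.Ext.mk₀_zero, Abelian.Ext.zero_comp]

lemma exists_comp_g_eq_of_subsingleton_ext (hS : S.ShortExact)
    (h : Subsingleton (Abelian.Ext X S.X₁ 1)) (f : X ⟶ S.X₃) :
    ∃ f' : X ⟶ S.X₂, f' ≫ S.g = f := by
  obtain ⟨ζ, hζ⟩ := Abelian.Ext.covariant_sequence_exact₃ X hS (Abelian.Ext.mk₀ f) (zero_add 1)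
    (h.elim _ _)
  refine ⟨Abelian.Ext.homEquiv₀ ζ, (Abelian.Ext.mk₀_bijective X S.X₃).injective ?_⟩
  rw [← Abelian.Ext.mk₀_comp_mk₀, Abelian.Ext.mk₀_homEquiv₀_apply, hζ]

lemma exists_extClass_comp_mk₀_eq [Projective S.X₂] (hS : S.ShortExact)
    (ξ : Abelian.Ext S.X₃ Y 1) :
    ∃ f : S.X₁ ⟶ Y, hS.extClass.comp (Abelian.Ext.mk₀ f) (add_zero 1) = ξ := by
  obtain ⟨ζ, hζ⟩ := Abelian.Ext.contravariant_sequence_exact₃ hS Y ξ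
    (Abelian.Ext.eq_zero_of_projective _) (add_zero 1)
  exact ⟨Abelian.Ext.homEquiv₀ ζ, by rwa [Abelian.Ext.mk₀_homEquiv₀_apply]⟩

lemma subsingleton_ext_one_of_forall_extends (hS : S.Exact) (hP : Projective S.X₂) (hg : Epi S.g)
    (h : ∀ f : S.X₁ ⟶ Y, ∃ f' : S.X₂ ⟶ Y, S.f ≫ f' = f) :
    Subsingleton (Abelian.Ext S.X₃ Y 1) := by
  have hK : (ShortComplex.mk (Limits.kernel.ι S.g) S.g (Limits.kernel.condition _)).ShortExact :=
    { exact := ShortComplex.exact_kernel S.g }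
  have : Epi (Limits.kernel.lift S.g S.f S.zero) := hS.epi_kernelLift
  refine subsingleton_of_forall_eq 0 fun ξ => ?_
  obtain ⟨f, rfl⟩ := exists_extClass_comp_mk₀_eq hK ξ
  obtain ⟨f', hf'⟩ := h (Limits.kernel.lift S.g S.f S.zero ≫ f)
  have hf : Limits.kernel.ι S.g ≫ f' = f := by
    rw [← cancel_epi (Limits.kernel.lift S.g S.f S.zero), Limits.kernel.lift_ι_assoc, hf']
  rw [← hf, ← Abelian.Ext.mk₀_comp_mk₀]
  exact hK.extClass_comp_assoc _

lemma exists_extClass_eq_extClass_comp_mk₀ (hS : S.ShortExact) (f : S.X₁ ⟶ Y) :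
    ∃ (E : C) (i : Y ⟶ E) (p : E ⟶ S.X₃) (w : i ≫ p = 0)
      (hE : (ShortComplex.mk i p w).ShortExact),
      hE.extClass = hS.extClass.comp (Abelian.Ext.mk₀ f) (add_zero 1) := by
  have := hS.mono_f
  have := hS.epi_g
  let i : Y ⟶ Limits.pushout f S.f := Limits.pushout.inl f S.f
  let j : S.X₂ ⟶ Limits.pushout f S.f := Limits.pushout.inr f S.f
  let p : Limits.pushout f S.f ⟶ S.X₃ := Limits.pushout.desc 0 S.g (by simp)
  have hij : f ≫ i = S.f ≫ j := Limits.pushout.condition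
  have w : i ≫ p = 0 := Limits.pushout.inl_desc _ _ _
  have hp : j ≫ p = S.g := Limits.pushout.inr_desc _ _ _
  have : Epi p := epi_of_epi_fac hp
  have hE : (ShortComplex.mk i p w).Exact :=
    ShortComplex.exact_of_g_is_cokernel _ <| Limits.CokernelCofork.IsColimit.ofπ' p w
      fun m hm =>
        have hjm : S.f ≫ j ≫ m = 0 := by rw [← reassoc_of% hij, hm, Limits.comp_zero]
        ⟨hS.exact.desc (j ≫ m) hjm, Limits.pushout.hom_ext
          (by rw [reassoc_of% w, Limits.zero_comp, hm])
          (by rw [reassoc_of% hp]; exact hS.exact.g_desc _ hjm)⟩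
  let α : S ⟶ ShortComplex.mk i p w :=
    { τ₁ := f, τ₂ := j, τ₃ := 𝟙 _, comm₁₂ := hij, comm₂₃ := by simp [hp] }
  refine ⟨_, i, p, w, { exact := hE }, ?_⟩
  have := hS.extClass_naturality { exact := hE } α
  rwa [Abelian.Ext.mk₀_id_comp, eq_comm] at this

lemma subsingleton_ext_one_of_forall_split [EnoughProjectives C]
    (h : ∀ (E : C) (i : Y ⟶ E) (p : E ⟶ X) (w : i ≫ p = 0),
      (ShortComplex.mk i p w).ShortExact → ∃ s : X ⟶ E, s ≫ p = 𝟙 X) :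
    Subsingleton (Abelian.Ext X Y 1) := by
  have hP : (ShortComplex.mk _ (Projective.π X) (Limits.kernel.condition _)).ShortExact :=
    { exact := ShortComplex.exact_kernel _ }
  refine subsingleton_of_forall_eq 0 fun ξ => ?_
  obtain ⟨f, rfl⟩ := exists_extClass_comp_mk₀_eq hP ξ
  obtain ⟨E, i, p, w, hE, hξ⟩ := exists_extClass_eq_extClass_comp_mk₀ hP f
  obtain ⟨s, hs⟩ := h E i p w hE
  have hp : (Abelian.Ext.mk₀ p).comp hE.extClass (zero_add 1) = 0 := hE.comp_extClass
  rw [← hξ, ← Abelian.Ext.mk₀_id_comp hE.extClass, ← hs, ← Abelian.Ext.mk₀_comp_mk₀,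
    Abelian.Ext.comp_assoc_of_second_deg_zero, hp, Abelian.Ext.comp_zero]

lemma exists_extension_subsingleton_ext_one [Projective S.X₂] (hS : S.ShortExact) {N : C}
    (l : S.X₁ ⟶ N) (hl : ∀ f : S.X₁ ⟶ Y, ∃ f' : N ⟶ Y, l ≫ f' = f)
    (hN : Subsingleton (Abelian.Ext N Y 1)) :
    ∃ (E : C) (i : N ⟶ E) (p : E ⟶ S.X₃) (w : i ≫ p = 0),
      (ShortComplex.mk i p w).ShortExact ∧ Subsingleton (Abelian.Ext E Y 1) := by
  obtain ⟨E, i, p, w, hE, hξ⟩ := exists_extClass_eq_extClass_comp_mk₀ hS l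
  refine ⟨E, i, p, w, hE, subsingleton_of_forall_eq 0 fun ξ => ?_⟩
  obtain ⟨ζ, rfl⟩ := Abelian.Ext.contravariant_sequence_exact₂ hE Y ξ (hN.elim _ _)
  obtain ⟨f, rfl⟩ := exists_extClass_comp_mk₀_eq hS ζ
  obtain ⟨f', rfl⟩ := hl f
  rw [← Abelian.Ext.mk₀_comp_mk₀, ← Abelian.Ext.comp_assoc_of_second_deg_zero, ← hξ]
  exact hE.comp_extClass_assoc _ _

end Ext

/-! ### Additive closure of an object -/

section InAdd

/-- `X ∈ add S` in a preadditive category: `X` is a direct summand of a finite direct sum of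
copies of `S`.  The inclusion and the projection are given by their components, so that no
biproducts are needed. -/
def InAdd {C : Type u} [Category.{v} C] [Preadditive C] (S X : C) : Prop :=
  ∃ (n : ℕ) (s : Fin n → (X ⟶ S)) (r : Fin n → (S ⟶ X)), ∑ j, s j ≫ r j = 𝟙 X

namespace InAdd

variable {C : Type u} [Category.{v} C] [Preadditive C] {S X Z : C}

lemma of_retract (ρ : Retract X S) : InAdd S X :=
  ⟨1, fun _ => ρ.i, fun _ => ρ.r, by simp⟩

lemma biproduct [Limits.HasFiniteBiproducts C] (S : C) (n : ℕ) :
    InAdd S (⨁ fun _ : Fin n => S) :=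
  ⟨n, Limits.biproduct.π _, Limits.biproduct.ι _, Limits.biproduct.total⟩

lemma iff_exists_biproduct [Limits.HasFiniteBiproducts C] :
    InAdd S X ↔ ∃ (n : ℕ) (s : X ⟶ ⨁ fun _ : Fin n => S) (r : (⨁ fun _ : Fin n => S) ⟶ X),
      s ≫ r = 𝟙 X := by
  constructor
  · rintro ⟨n, s, r, hsr⟩
    exact ⟨n, Limits.biproduct.lift s, Limits.biproduct.desc r,
      Limits.biproduct.lift_desc.trans hsr⟩
  · rintro ⟨n, s, r, hsr⟩
    have hr : ∑ j, Limits.biproduct.π (fun _ => S) j ≫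
        Limits.biproduct.ι (fun _ => S) j ≫ r = r := by
      simp only [← Category.assoc, ← Preadditive.sum_comp, Limits.biproduct.total,
        Category.id_comp]
    refine ⟨n, fun j => s ≫ Limits.biproduct.π (fun _ => S) j,
      fun j => Limits.biproduct.ι (fun _ => S) j ≫ r, ?_⟩
    simp only [Category.assoc, ← Preadditive.comp_sum, hr, hsr]

lemma map {D : Type*} [Category* D] [Preadditive D] (F : C ⥤ D) [F.Additive] (h : InAdd S X) :
    InAdd (F.obj S) (F.obj X) := by
  obtain ⟨n, s, r, hsr⟩ := h
  refine ⟨n, fun j => F.map (s j), fun j => F.map (r j), ?_⟩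
  simp_rw [← F.map_comp, ← F.map_sum, hsr, F.map_id]

lemma exists_map_eq {D : Type*} [Category* D] [Preadditive D] {F : C ⥤ D} [F.Additive]
    (h : InAdd S X) (hS : ∀ f : F.obj S ⟶ F.obj Z, ∃ g, F.map g = f) (f : F.obj X ⟶ F.obj Z) :
    ∃ g, F.map g = f := by
  obtain ⟨n, s, r, hsr⟩ := h
  choose g hg using fun j => hS (F.map (r j) ≫ f)
  refine ⟨∑ j, s j ≫ g j, ?_⟩
  rw [← Category.id_comp f, ← F.map_id, ← hsr]
  simp only [F.map_sum, F.map_comp, Preadditive.sum_comp, Category.assoc, hg]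

lemma eq_zero_of_forall_comp_eq_zero (h : InAdd S X) {f : X ⟶ Z}
    (hf : ∀ g : S ⟶ X, g ≫ f = 0) : f = 0 := by
  obtain ⟨n, s, r, hsr⟩ := h
  rw [← Category.id_comp f, ← hsr, Preadditive.sum_comp]
  exact Finset.sum_eq_zero fun j _ => by rw [Category.assoc, hf, Limits.comp_zero]

lemma exists_lift (h : InAdd S X) {W : C} {q : W ⟶ Z} (hq : ∀ f : S ⟶ Z, ∃ g, g ≫ q = f)
    (f : X ⟶ Z) : ∃ g, g ≫ q = f := by
  obtain ⟨n, s, r, hsr⟩ := h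
  choose g hg using fun j => hq (r j ≫ f)
  refine ⟨∑ j, s j ≫ g j, ?_⟩
  rw [← Category.id_comp f, ← hsr]
  simp only [Preadditive.sum_comp, Category.assoc, hg]

lemma projective (h : InAdd S X) [Projective S] : Projective X where
  factors f q _ := h.exists_lift (fun g => ⟨Projective.factorThru g q, by simp⟩) f

lemma subsingleton_hom_left (h : InAdd S X) (hS : Subsingleton (S ⟶ Z)) :
    Subsingleton (X ⟶ Z) :=
  subsingleton_of_forall_eq 0 fun _ =>
    h.eq_zero_of_forall_comp_eq_zero fun _ => hS.elim _ _

lemma subsingleton_hom_right (h : InAdd S X) (hS : Subsingleton (Z ⟶ S)) :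
    Subsingleton (Z ⟶ X) := by
  obtain ⟨n, s, r, hsr⟩ := h
  refine subsingleton_of_forall_eq 0 fun f => ?_
  rw [← Category.comp_id f, ← hsr, Preadditive.comp_sum]
  exact Finset.sum_eq_zero fun j _ => by
    rw [← Category.assoc, hS.elim (f ≫ s j) 0, Limits.zero_comp]

section Approximation

variable (k : Type*) [Field k] [Linear k C] [Limits.HasFiniteBiproducts C]

lemma exists_right_approx (S X : C) [Module.Finite k (S ⟶ X)] :
    ∃ (R : C) (r : R ⟶ X), InAdd S R ∧ ∀ f : S ⟶ X, ∃ g : S ⟶ R, g ≫ r = f := by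
  obtain ⟨n, b, hb⟩ := Module.Finite.exists_fin (R := k) (M := S ⟶ X)
  refine ⟨_, Limits.biproduct.desc b, biproduct S n, fun f => ?_⟩
  obtain ⟨c, rfl⟩ := (Submodule.mem_span_range_iff_exists_fun k).1
    (hb.ge (Submodule.mem_top (x := f)))
  exact ⟨Limits.biproduct.lift fun j => c j • 𝟙 S, by simp [Limits.biproduct.lift_desc]⟩

lemma exists_left_approx (S X : C) [Module.Finite k (X ⟶ S)] :
    ∃ (R : C) (l : X ⟶ R), InAdd S R ∧ ∀ f : X ⟶ S, ∃ g : R ⟶ S, l ≫ g = f := by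
  obtain ⟨n, b, hb⟩ := Module.Finite.exists_fin (R := k) (M := X ⟶ S)
  refine ⟨_, Limits.biproduct.lift b, biproduct S n, fun f => ?_⟩
  obtain ⟨c, rfl⟩ := (Submodule.mem_span_range_iff_exists_fun k).1
    (hb.ge (Submodule.mem_top (x := f)))
  exact ⟨Limits.biproduct.desc fun j => c j • 𝟙 S, by simp [Limits.biproduct.lift_desc]⟩

end Approximation

lemma module_finite {R : Type*} [Ring R] {P M : ModuleCat.{v} R} [Module.Finite R P]
    (h : InAdd P M) : Module.Finite R M := by
  obtain ⟨n, s, r, hsr⟩ := h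
  refine .of_surjective (LinearMap.lsum R (fun _ => P) ℕ fun j => (r j).hom) fun m => ?_
  refine ⟨fun j => s j m, ?_⟩
  simpa [ModuleCat.hom_sum, LinearMap.sum_apply] using
    LinearMap.congr_fun (congrArg ModuleCat.Hom.hom hsr) m

section Ext

variable {C : Type u} [Category.{v} C] [Abelian C] [HasExt.{w} C] {S X Z : C} {n : ℕ}

lemma subsingleton_ext_left (h : InAdd S X) (hS : Subsingleton (Abelian.Ext S Z n)) :
    Subsingleton (Abelian.Ext X Z n) := by
  obtain ⟨m, s, r, hsr⟩ := h
  refine subsingleton_of_forall_eq 0 fun ξ => ?_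
  rw [← Abelian.Ext.mk₀_id_comp ξ, ← hsr, Abelian.Ext.mk₀_sum, Abelian.Ext.sum_comp]
  exact Finset.sum_eq_zero fun j _ => by
    rw [← Abelian.Ext.mk₀_comp_mk₀_assoc, hS.elim ((Abelian.Ext.mk₀ (r j)).comp ξ (zero_add n)) 0,
      Abelian.Ext.comp_zero]

lemma subsingleton_ext_right (h : InAdd S X) (hS : Subsingleton (Abelian.Ext Z S n)) :
    Subsingleton (Abelian.Ext Z X n) := by
  obtain ⟨m, s, r, hsr⟩ := h
  refine subsingleton_of_forall_eq 0 fun ξ => ?_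
  rw [← Abelian.Ext.comp_mk₀_id ξ, ← hsr, Abelian.Ext.mk₀_sum, Abelian.Ext.comp_sum]
  exact Finset.sum_eq_zero fun j _ => by
    rw [← Abelian.Ext.mk₀_comp_mk₀, ← Abelian.Ext.comp_assoc_of_third_deg_zero,
      hS.elim (ξ.comp (Abelian.Ext.mk₀ (s j)) (add_zero n)) 0, Abelian.Ext.zero_comp]

end Ext

end InAdd

end InAdd

theorem exists_extension_inAdd_subsingleton_ext {C : Type u} [Category.{v} C] [Abelian C]
    [HasExt.{w} C] (k : Type*) [Field k] [Linear k C] {P Q : ShortComplex C}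
    (hP : P.ShortExact) (hQ : Q.ShortExact) [Projective Q.X₂] [Module.Finite k (Q.X₁ ⟶ P.X₁)]
    (h₁₃ : Subsingleton (P.X₁ ⟶ P.X₃)) (h₁₂ : Subsingleton (Abelian.Ext P.X₁ P.X₂ 1))
    (hext₁₃ : Subsingleton (Abelian.Ext P.X₁ P.X₃ 1))
    (hPQ : Subsingleton (Abelian.Ext P.X₁ Q.X₃ 1))
    (hQP : Subsingleton (Abelian.Ext Q.X₃ P.X₃ 1)) :
    ∃ (N E : C) (i : N ⟶ E) (p : E ⟶ Q.X₃) (w : i ≫ p = 0),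
      (ShortComplex.mk i p w).ShortExact ∧ InAdd P.X₁ N ∧
      Subsingleton (Abelian.Ext E P.X₂ 1) ∧ Subsingleton (Abelian.Ext P.X₁ E 1) ∧
      Subsingleton (Abelian.Ext E P.X₁ 1) := by
  have := Abelian.hasFiniteBiproducts (C := C)
  have h₁₁ := subsingleton_ext_one_X₁_right hP h₁₃ h₁₂
  obtain ⟨N, l, hN, hl⟩ := InAdd.exists_left_approx k P.X₁ Q.X₁
  obtain ⟨E, i, p, w, hE, hE₁⟩ :=
    exists_extension_subsingleton_ext_one hQ l hl (hN.subsingleton_ext_left h₁₁)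
  have hE₃ := subsingleton_ext_X₂_left hE (hN.subsingleton_ext_left hext₁₃) hQP
  exact ⟨N, E, i, p, w, hE, hN, subsingleton_ext_X₂_right hP hE₁ hE₃,
    subsingleton_ext_X₂_right hE (hN.subsingleton_ext_right h₁₁) hPQ, hE₁⟩

/-! ### Right modules and the ideal `A e A` -/

lemma subsingleton_rext1_of_subsingleton_ext (k : Type) [Field k] (A : Type) [Ring A] [Algebra k A]
    {M N : ModuleCat.{0} Aᵐᵒᵖ} (h : Subsingleton (Abelian.Ext M N 1)) :
    Subsingleton (rext1 k A M N) := by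
  let P : ProjectiveResolution M := projectiveResolution M
  have hz : Limits.IsZero ((P.complex.linearYonedaObj k N).homology 1) := by
    rw [← HomologicalComplex.exactAt_iff_isZero_homology,
      HomologicalComplex.exactAt_iff' _ 0 1 2 (by simp) (by simp),
      ShortComplex.moduleCat_exact_iff]
    intro (x : P.complex.X 1 ⟶ N) hx
    exact (P.extMk_eq_zero_iff x 2 rfl hx 0 rfl).1 (h.elim _ _)
  exact ModuleCat.subsingleton_of_isZero (hz.of_iso (P.isoExt (R := k) 1 N))

section Modules

open scoped RightActions

lemma finite_moduleCat_hom (k : Type*) [Field k] {R : Type*} [Ring R] [Algebra k R]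
    [Module.Finite k R] (M N : ModuleCat.{v} R) [Module.Finite R M] [Module.Finite R N] :
    Module.Finite k (M ⟶ N) := by
  let := ModuleCat.moduleOfAlgebraModule (k := k) N
  have := ModuleCat.isScalarTower_of_algebra_moduleCat (k := k) N
  have : Module.Finite k N := Module.Finite.trans R N
  obtain ⟨n, b, hb⟩ := Module.Finite.exists_fin (R := R) (M := M)
  let ev : (M ⟶ N) →ₗ[k] (Fin n → N) :=
    { toFun f j := f (b j)
      map_add' _ _ := rfl
      map_smul' _ _ := rfl }
  refine Module.Finite.of_injective ev fun f g hfg => ModuleCat.hom_ext ?_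
  exact LinearMap.ext_on_range hb (congrFun hfg)

lemma subsingleton_ext_range_one_of_forall_extends {R : Type u} [Ring R] [Small.{v} R]
    {S : ShortComplex (ModuleCat.{v} R)} {N : ModuleCat.{v} R} (hS : S.Exact)
    (hP : Projective S.X₂) (h : ∀ f : S.X₁ ⟶ N, ∃ f' : S.X₂ ⟶ N, S.f ≫ f' = f) :
    Subsingleton (Abelian.Ext (ModuleCat.of R (LinearMap.range S.g.hom)) N 1) := by
  let π : S.X₂ ⟶ ModuleCat.of R (LinearMap.range S.g.hom) := ModuleCat.ofHom S.g.hom.rangeRestrict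
  have hπ : Epi π := (ModuleCat.epi_iff_surjective _).2 S.g.hom.surjective_rangeRestrict
  have w : S.f ≫ π = 0 := ModuleCat.hom_ext <| LinearMap.ext fun x =>
    Subtype.ext (ConcreteCategory.congr_hom S.zero x)
  have hSπ : (ShortComplex.mk S.f π w).Exact := by
    rw [ShortComplex.moduleCat_exact_iff] at hS ⊢
    exact fun x hx => hS x (congrArg Subtype.val hx)
  exact subsingleton_ext_one_of_forall_extends hSπ hP hπ h

variable {A : Type u} [Ring A]

/-- The submodule `M e A` of a right `A`-module `M`, generated by the elements `m e`.  For an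
idempotent `e` it is the trace of the projective module `e A` in `M`. -/
def idealTrace (e : A) (M : Type v) [AddCommGroup M] [Module Aᵐᵒᵖ M] : Submodule Aᵐᵒᵖ M :=
  Submodule.span Aᵐᵒᵖ {x | ∃ m : M, x = m <• e}

variable {e : A} {M N : Type v} [AddCommGroup M] [AddCommGroup N] [Module Aᵐᵒᵖ M] [Module Aᵐᵒᵖ N]

lemma smul_mem_idealTrace (e : A) (m : M) : m <• e ∈ idealTrace e M :=
  Submodule.subset_span ⟨m, rfl⟩

lemma idealTrace_le_iff {P : Submodule Aᵐᵒᵖ M} : idealTrace e M ≤ P ↔ ∀ m, m <• e ∈ P :=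
  Submodule.span_le.trans ⟨fun h m => h ⟨m, rfl⟩, by rintro h _ ⟨m, rfl⟩; exact h m⟩

lemma idealTrace_le_comap (e : A) (f : M →ₗ[Aᵐᵒᵖ] N) :
    idealTrace e M ≤ (idealTrace e N).comap f :=
  idealTrace_le_iff.2 fun m => by
    simpa only [Submodule.mem_comap, map_smul] using smul_mem_idealTrace e (f m)

lemma idealTrace_le_map {f : M →ₗ[Aᵐᵒᵖ] N} (hf : Function.Surjective f) :
    idealTrace e N ≤ (idealTrace e M).map f :=
  idealTrace_le_iff.2 fun n => by
    obtain ⟨m, rfl⟩ := hf n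
    exact ⟨m <• e, smul_mem_idealTrace e m, map_smul ..⟩

lemma map_idealTrace_equiv (e : A) (f : M ≃ₗ[Aᵐᵒᵖ] N) :
    (idealTrace e M).map f.toLinearMap = idealTrace e N :=
  (Submodule.map_le_iff_le_comap.2 (idealTrace_le_comap e _)).antisymm
    (idealTrace_le_map f.surjective)

variable (e) in
/-- The functor `M ↦ M / M e A` on right `A`-modules, that is, `M ↦ M ⊗_A A/AeA`. -/
def quotientTrace : ModuleCat.{v} Aᵐᵒᵖ ⥤ ModuleCat.{v} Aᵐᵒᵖ where
  obj M := ModuleCat.of Aᵐᵒᵖ (M ⧸ idealTrace e M)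
  map f := ModuleCat.ofHom (Submodule.mapQ _ _ f.hom (idealTrace_le_comap e f.hom))
  map_id M := by ext; rfl
  map_comp f g := by ext; rfl

instance : (quotientTrace e).Additive where
  map_add {M N f g} := by
    ext x
    obtain ⟨m, rfl⟩ := (idealTrace e M).mkQ_surjective x
    rfl

variable (e) in
/-- The natural projection `M ⟶ M / M e A`. -/
def toQuotientTrace (M : ModuleCat.{v} Aᵐᵒᵖ) : M ⟶ (quotientTrace e).obj M :=
  ModuleCat.ofHom (idealTrace e M).mkQ

instance (M : ModuleCat.{v} Aᵐᵒᵖ) : Epi (toQuotientTrace e M) :=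
  (ModuleCat.epi_iff_surjective _).2 (idealTrace e M).mkQ_surjective

lemma mono_toQuotientTrace {M : ModuleCat.{v} Aᵐᵒᵖ} (hM : idealTrace e M = ⊥) :
    Mono (toQuotientTrace e M) :=
  (ModuleCat.mono_iff_ker_eq_bot _).2 ((Submodule.ker_mkQ _).trans hM)

instance {M N : ModuleCat.{v} Aᵐᵒᵖ} (f : M ⟶ N) [Epi f] : Epi ((quotientTrace e).map f) :=
  have h : toQuotientTrace e M ≫ (quotientTrace e).map f = f ≫ toQuotientTrace e N := rfl
  epi_of_epi_fac h

lemma quotientTrace_exact {S : ShortComplex (ModuleCat.{v} Aᵐᵒᵖ)} (hS : S.Exact)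
    (hg : Epi S.g) :
    (S.map (quotientTrace e)).Exact := by
  rw [ModuleCat.epi_iff_surjective] at hg
  rw [ShortComplex.moduleCat_exact_iff] at hS ⊢
  intro y hy
  obtain ⟨x, rfl⟩ := (idealTrace e S.X₂).mkQ_surjective y
  obtain ⟨t, ht, htx⟩ := idealTrace_le_map hg ((Submodule.Quotient.mk_eq_zero _).1 hy)
  obtain ⟨w, hw⟩ := hS (x - t) (by rw [map_sub]; exact sub_eq_zero.2 htx.symm)
  refine ⟨(idealTrace e S.X₁).mkQ w, (Submodule.Quotient.eq _).2 ?_⟩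
  change S.f w - x ∈ _
  rw [hw, sub_sub_cancel_left]
  exact neg_mem ht

end Modules

section JTriv

open scoped RightActions

variable {A : Type} [Ring A] {e : A} {M N E : Type} [AddCommGroup M] [AddCommGroup N]
  [AddCommGroup E] [Module Aᵐᵒᵖ M] [Module Aᵐᵒᵖ N] [Module Aᵐᵒᵖ E]

lemma jTriv_iff : JTriv e M ↔ ∀ m : M, m <• e = 0 := by
  refine ⟨fun h => h e (Submodule.subset_span ⟨1, (one_mul e).symm⟩), fun h a ha m => ?_⟩
  induction ha using Submodule.span_induction generalizing m with
  | mem x hx => obtain ⟨b, rfl⟩ := hx; rw [MulOpposite.op_mul, mul_smul, h]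
  | zero => rw [MulOpposite.op_zero, zero_smul]
  | add x y _ _ hx hy => rw [MulOpposite.op_add, add_smul, hx, hy, add_zero]
  | smul b x _ hx =>
    change m <• (x * b.unop) = 0
    rw [MulOpposite.op_mul, mul_smul, hx, smul_zero]

lemma jTriv_iff_idealTrace_eq_bot : JTriv e M ↔ idealTrace e M = ⊥ := by
  rw [jTriv_iff, ← le_bot_iff, idealTrace_le_iff]
  rfl

lemma jTriv_quotient_idealTrace : JTriv e (M ⧸ idealTrace e M) :=
  jTriv_iff.2 fun y => by
    obtain ⟨m, rfl⟩ := (idealTrace e M).mkQ_surjective y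
    exact (Submodule.Quotient.mk_eq_zero _).2 (smul_mem_idealTrace e m)

lemma JTriv.idealTrace_le_ker (hN : JTriv e N) (f : M →ₗ[Aᵐᵒᵖ] N) :
    idealTrace e M ≤ LinearMap.ker f :=
  idealTrace_le_iff.2 fun m => by rw [LinearMap.mem_ker, map_smul, jTriv_iff.1 hN]

lemma JTriv.of_exact (he : IsIdempotentElem e) {u : M →ₗ[Aᵐᵒᵖ] E} {v : E →ₗ[Aᵐᵒᵖ] N}
    (huv : Function.Exact u v) (hM : JTriv e M) (hN : JTriv e N) : JTriv e E := by
  refine jTriv_iff.2 fun x => ?_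
  have hx : v (x <• e) = 0 := by rw [map_smul, jTriv_iff.1 hN]
  obtain ⟨y, hy⟩ := (huv _).1 hx
  rw [← he.eq, MulOpposite.op_mul, mul_smul, ← hy, ← map_smul, jTriv_iff.1 hM, map_zero]

lemma idealTrace_genIdeal (he : IsIdempotentElem e) : idealTrace e (genIdeal e) = ⊤ := by
  rw [eq_top_iff, ← Submodule.map_le_map_iff_of_injective (genIdeal e).injective_subtype,
    Submodule.map_subtype_top]
  refine Submodule.span_le.2 ?_
  rintro _ ⟨b, rfl⟩
  refine ⟨(⟨b * e, Submodule.subset_span ⟨b, rfl⟩⟩ : genIdeal e) <• e, smul_mem_idealTrace e _, ?_⟩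
  change b * e * e = b * e
  rw [mul_assoc, he.eq]

lemma JTriv.subsingleton_genIdeal_hom (he : IsIdempotentElem e) {Y : ModuleCat.{0} Aᵐᵒᵖ}
    (hY : JTriv e Y) : Subsingleton (ModuleCat.of Aᵐᵒᵖ (genIdeal e) ⟶ Y) :=
  subsingleton_of_forall_eq 0 fun f => ModuleCat.hom_ext <| LinearMap.ext fun _ =>
    hY.idealTrace_le_ker f.hom ((idealTrace_genIdeal he).ge trivial)

lemma inAddJ_iff {X : ModuleCat.{0} Aᵐᵒᵖ} :
    InAddJ e X ↔ InAdd (ModuleCat.of Aᵐᵒᵖ (genIdeal e)) X := by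
  constructor
  · rintro ⟨n, s, r, hsr⟩
    refine ⟨n, fun j => ModuleCat.ofHom (LinearMap.proj j ∘ₗ s),
      fun j => ModuleCat.ofHom (r ∘ₗ LinearMap.single Aᵐᵒᵖ (fun _ => genIdeal e) j), ?_⟩
    ext x
    have hx : s x = ∑ j, LinearMap.single Aᵐᵒᵖ (fun _ => genIdeal e) j (s x j) :=
      (Finset.univ_sum_single (s x)).symm
    rw [ModuleCat.hom_sum, LinearMap.sum_apply]
    exact (map_sum r _ _).symm.trans ((congrArg r hx.symm).trans (LinearMap.congr_fun hsr x))
  · rintro ⟨n, s, r, hsr⟩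
    refine ⟨n, LinearMap.pi fun j => (s j).hom, LinearMap.lsum Aᵐᵒᵖ _ ℕ fun j => (r j).hom, ?_⟩
    ext x
    simpa [ModuleCat.hom_sum, LinearMap.sum_apply] using
      LinearMap.congr_fun (congrArg ModuleCat.Hom.hom hsr) x

lemma shortExact_genIdeal_quotient (e : A) :
    (ModuleCat.shortComplexOfCompEqZero (genIdeal e).subtype (genIdeal e).mkQ
      (LinearMap.exact_subtype_mkQ _).linearMap_comp_eq_zero).ShortExact :=
  ModuleCat.shortComplex_shortExact _ (LinearMap.exact_subtype_mkQ _)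
    (genIdeal e).injective_subtype (genIdeal e).mkQ_surjective

lemma isAddJApprox_of_shortExact (he : IsIdempotentElem e)
    {S : ShortComplex (ModuleCat.{0} Aᵐᵒᵖ)} (hS : S.ShortExact)
    (h₁ : InAdd (ModuleCat.of Aᵐᵒᵖ (genIdeal e)) S.X₁) (h₃ : JTriv e S.X₃) :
    IsAddJApprox e S.X₁ S.X₂ S.f.hom := by
  have := hS.mono_f
  refine ⟨inAddJ_iff.2 h₁, fun Z hZ g => ?_⟩
  have hZ₃ := (inAddJ_iff.1 hZ).subsingleton_hom_left (h₃.subsingleton_genIdeal_hom he)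
  have hg : ModuleCat.ofHom g ≫ S.g = 0 := hZ₃.elim _ _
  exact ⟨(hS.exact.lift _ hg).hom, congrArg ModuleCat.Hom.hom (hS.exact.lift_f _ hg)⟩

lemma subsingleton_ext_quotient_genIdeal_of_forall_split (he : IsIdempotentElem e)
    {Y : ModuleCat.{0} Aᵐᵒᵖ} (hY : JTriv e Y)
    (h : ∀ (E : ModuleCat.{0} Aᵐᵒᵖ) (u : (A ⧸ genIdeal e) →ₗ[Aᵐᵒᵖ] E) (v : E →ₗ[Aᵐᵒᵖ] Y),
      JTriv e E → Function.Injective u → Function.Surjective v → Function.Exact u v →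
      ∃ s : Y →ₗ[Aᵐᵒᵖ] E, v ∘ₗ s = LinearMap.id) :
    Subsingleton (Abelian.Ext Y (ModuleCat.of Aᵐᵒᵖ (A ⧸ genIdeal e)) 1) :=
  subsingleton_ext_one_of_forall_split fun E i p _ hS => by
    have hip : Function.Exact i.hom p.hom :=
      (ShortComplex.ShortExact.moduleCat_exact_iff_function_exact _).1 hS.exact
    obtain ⟨s, hs⟩ := h E i.hom p.hom (.of_exact he hip jTriv_quotient_idealTrace hY)
      hS.moduleCat_injective_f hS.moduleCat_surjective_g hip
    exact ⟨ModuleCat.ofHom s, ModuleCat.hom_ext hs⟩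

end JTriv

/-! ### Cluster-tilting objects in 2-Calabi-Yau categories -/

section Triangulated

open Pretriangulated

variable {C : Type u} [Category.{v} C] [HasShift C ℤ] {S T X Y Z : C}

lemma subsingleton_hom_shift [Subsingleton (X ⟶ Y)] :
    Subsingleton (X⟦(1 : ℤ)⟧ ⟶ Y⟦(1 : ℤ)⟧) :=
  (shiftFunctor C (1 : ℤ)).map_surjective.subsingleton

variable [Preadditive C]

/-- `T` is cluster-tilting: `add T` consists of the objects `X` with `Hom(T, X⟦1⟧) = 0`. -/
def IsClusterTilting (T : C) : Prop :=
  ∀ X : C, Subsingleton (T ⟶ X⟦(1 : ℤ)⟧) ↔ InAdd T X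

lemma IsClusterTilting.subsingleton_hom_retract_shift (hT : IsClusterTilting T)
    (ρ : Retract S T) : Subsingleton (T ⟶ S⟦(1 : ℤ)⟧) :=
  (hT S).2 (.of_retract ρ)

lemma IsClusterTilting.subsingleton_hom_shift (hT : IsClusterTilting T) :
    Subsingleton (T ⟶ T⟦(1 : ℤ)⟧) :=
  hT.subsingleton_hom_retract_shift (.refl T)

section TwoCalabiYau

variable (k : Type*) [Field k] [Linear k C]

variable (C) in
/-- `C` is Hom-finite over `k` and 2-Calabi-Yau: `⟦2⟧` is a Serre functor.  Only the existence of
the dualities is recorded, not their naturality. -/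
structure IsTwoCalabiYau : Prop where
  finite_hom (X Y : C) : Module.Finite k (X ⟶ Y)
  serre (X Y : C) : Nonempty ((X ⟶ Y) ≃ₗ[k] Module.Dual k (Y ⟶ X⟦(2 : ℤ)⟧))

variable {k} (hC : IsTwoCalabiYau C k)

namespace IsTwoCalabiYau

include hC

lemma finrank_hom (X Y : C) :
    Module.finrank k (X ⟶ Y) = Module.finrank k (Y ⟶ X⟦(1 : ℤ)⟧⟦(1 : ℤ)⟧) := by
  obtain ⟨E⟩ := hC.serre X Y
  rw [E.finrank_eq, Subspace.dual_finrank_eq]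
  exact (Linear.homCongr k (Iso.refl Y)
    ((shiftFunctorAdd' C (1 : ℤ) 1 2 rfl).app X)).finrank_eq

lemma subsingleton_hom_shift_shift (h : Subsingleton (X ⟶ Y)) :
    Subsingleton (Y ⟶ X⟦(1 : ℤ)⟧⟦(1 : ℤ)⟧) := by
  have := hC.finite_hom Y (X⟦(1 : ℤ)⟧⟦(1 : ℤ)⟧)
  rw [← Module.finrank_zero_iff (R := k), ← hC.finrank_hom]
  exact Module.finrank_zero_of_subsingleton

lemma subsingleton_hom_shift_symm (h : Subsingleton (X ⟶ Y⟦(1 : ℤ)⟧)) :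
    Subsingleton (Y ⟶ X⟦(1 : ℤ)⟧) := by
  have := hC.finite_hom Y (X⟦(1 : ℤ)⟧)
  have := subsingleton_hom_shift (X := X) (Y := Y⟦(1 : ℤ)⟧)
  rw [← Module.finrank_zero_iff (R := k), hC.finrank_hom]
  exact Module.finrank_zero_of_subsingleton

end IsTwoCalabiYau

end TwoCalabiYau

variable [Limits.HasZeroObject C] [∀ n : ℤ, (shiftFunctor C n).Additive] [Pretriangulated C]

lemma exists_comp_eq_of_distinguished {f : X ⟶ Y} {g : Y ⟶ Z} {δ : Z ⟶ X⟦(1 : ℤ)⟧}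
    (hd : Triangle.mk f g δ ∈ distTriang C) {W : C} (hW : Subsingleton (Z ⟶ W⟦(1 : ℤ)⟧))
    (a : X ⟶ W) : ∃ b : Y ⟶ W, f ≫ b = a := by
  obtain ⟨b', hb'⟩ : ∃ b' : Y⟦(1 : ℤ)⟧ ⟶ W⟦(1 : ℤ)⟧, a⟦(1 : ℤ)⟧' = (-f⟦(1 : ℤ)⟧') ≫ b' :=
    Triangle.yoneda_exact₂ _ (rot_of_distTriang _ (rot_of_distTriang _ hd)) _ (hW.elim _ _)
  obtain ⟨b, rfl⟩ := (shiftFunctor C (1 : ℤ)).map_surjective b'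
  refine ⟨-b, (shiftFunctor C (1 : ℤ)).map_injective ?_⟩
  rw [hb', Functor.map_comp, Functor.map_neg, Preadditive.comp_neg, Preadditive.neg_comp]

variable (S X) in
/-- A distinguished triangle `fiber ⟶ approx ⟶ X ⟶ fiber⟦1⟧` whose middle map is a right
`add S`-approximation of `X`. -/
structure RightApproxTriangle where
  fiber : C
  approx : C
  incl : fiber ⟶ approx
  hom : approx ⟶ X
  δ : X ⟶ fiber⟦(1 : ℤ)⟧
  distinguished : Triangle.mk incl hom δ ∈ distTriang C
  inAdd : InAdd S approx
  exists_lift : ∀ f : S ⟶ X, ∃ g : S ⟶ approx, g ≫ hom = f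

variable (S X) in
/-- A distinguished triangle `X ⟶ approx ⟶ cofiber ⟶ X⟦1⟧` whose first map is a left
`add S`-approximation of `X`. -/
structure LeftApproxTriangle where
  approx : C
  cofiber : C
  hom : X ⟶ approx
  proj : approx ⟶ cofiber
  δ : cofiber ⟶ X⟦(1 : ℤ)⟧
  distinguished : Triangle.mk hom proj δ ∈ distTriang C
  inAdd : InAdd S approx
  exists_extension : ∀ f : X ⟶ S, ∃ g : approx ⟶ S, hom ≫ g = f

namespace RightApproxTriangle

variable (D : RightApproxTriangle S X)

lemma incl_comp_hom : D.incl ≫ D.hom = 0 := comp_distTriang_mor_zero₁₂ _ D.distinguished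

lemma exists_hom_comp_eq {f : D.approx ⟶ Y} (hf : D.incl ≫ f = 0) : ∃ g, D.hom ≫ g = f := by
  obtain ⟨g, hg⟩ := Triangle.yoneda_exact₂ _ D.distinguished f hf
  exact ⟨g, hg.symm⟩

lemma subsingleton_hom_fiber_shift (hS : Subsingleton (S ⟶ S⟦(1 : ℤ)⟧)) :
    Subsingleton (S ⟶ D.fiber⟦(1 : ℤ)⟧) := by
  refine subsingleton_of_forall_eq 0 fun f => ?_
  have hR := (D.inAdd.map (shiftFunctor C (1 : ℤ))).subsingleton_hom_right hS
  obtain ⟨g, rfl⟩ := Triangle.coyoneda_exact₁ _ D.distinguished f (hR.elim _ _)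
  obtain ⟨g, rfl⟩ := D.exists_lift g
  exact (Category.assoc _ _ _).trans
    ((g ≫= comp_distTriang_mor_zero₂₃ _ D.distinguished).trans Limits.comp_zero)

lemma subsingleton_fiber_hom_fiber_shift (hX : Subsingleton (X ⟶ X⟦(1 : ℤ)⟧))
    (hSS : Subsingleton (S ⟶ S⟦(1 : ℤ)⟧)) (hS : Subsingleton (D.fiber ⟶ S⟦(1 : ℤ)⟧)) :
    Subsingleton (D.fiber ⟶ D.fiber⟦(1 : ℤ)⟧) := by
  refine subsingleton_of_forall_eq 0 fun f => ?_
  have hR := (D.inAdd.map (shiftFunctor C (1 : ℤ))).subsingleton_hom_right hS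
  obtain ⟨g, rfl⟩ := Triangle.coyoneda_exact₁ _ D.distinguished f (hR.elim _ _)
  obtain ⟨b, rfl⟩ := exists_comp_eq_of_distinguished D.distinguished hX g
  have hb := D.inAdd.subsingleton_hom_left (D.subsingleton_hom_fiber_shift hSS)
  exact (Category.assoc _ _ _).trans ((D.incl ≫= hb.elim (b ≫ D.δ) 0).trans Limits.comp_zero)

end RightApproxTriangle

lemma LeftApproxTriangle.subsingleton_cofiber_hom_shift (D : LeftApproxTriangle S X)
    (hS : Subsingleton (S ⟶ S⟦(1 : ℤ)⟧)) : Subsingleton (D.cofiber ⟶ S⟦(1 : ℤ)⟧) := by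
  refine subsingleton_of_forall_eq 0 fun f => ?_
  have hR := D.inAdd.subsingleton_hom_left hS
  obtain ⟨g, rfl⟩ := Triangle.yoneda_exact₃ _ D.distinguished f (hR.elim _ _)
  obtain ⟨g, rfl⟩ := (shiftFunctor C (1 : ℤ)).map_surjective g
  obtain ⟨g, rfl⟩ := D.exists_extension g
  have h : D.δ ≫ D.hom⟦(1 : ℤ)⟧' = 0 := comp_distTriang_mor_zero₃₁ _ D.distinguished
  change D.δ ≫ (D.hom ≫ g)⟦(1 : ℤ)⟧' = 0
  rw [Functor.map_comp, reassoc_of% h, Limits.zero_comp]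

lemma LeftApproxTriangle.exists_comp_δ_shift_eq (D : LeftApproxTriangle S X)
    (hZ : Subsingleton (Z ⟶ S⟦(1 : ℤ)⟧⟦(1 : ℤ)⟧)) (g : Z ⟶ X⟦(1 : ℤ)⟧⟦(1 : ℤ)⟧) :
    ∃ g' : Z ⟶ D.cofiber⟦(1 : ℤ)⟧, g' ≫ D.δ⟦(1 : ℤ)⟧' = g := by
  have hR := ((D.inAdd.map (shiftFunctor C (1 : ℤ))).map
    (shiftFunctor C (1 : ℤ))).subsingleton_hom_right hZ
  obtain ⟨g', hg'⟩ : ∃ g' : Z ⟶ D.cofiber⟦(1 : ℤ)⟧, g = g' ≫ (-D.δ⟦(1 : ℤ)⟧') :=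
    Triangle.coyoneda_exact₁ _ (rot_of_distTriang _ (rot_of_distTriang _
      (rot_of_distTriang _ D.distinguished))) g (hR.elim _ _)
  exact ⟨-g', by rw [hg', Preadditive.neg_comp, Preadditive.comp_neg]⟩

namespace IsTwoCalabiYau

variable {k : Type*} [Field k] [Linear k C] (hC : IsTwoCalabiYau C k)
include hC

lemma eq_zero_of_forall_comp_eq_zero (hT : Subsingleton (T ⟶ T⟦(1 : ℤ)⟧)) {y : T ⟶ Z}
    (h : ∀ g : Z ⟶ T⟦(1 : ℤ)⟧⟦(1 : ℤ)⟧, y ≫ g = 0) : y = 0 := by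
  obtain ⟨W, w, δ, hd⟩ := distinguished_cocone_triangle y
  have := hC.finite_hom
  have hw : Function.Surjective (Linear.rightComp k T w) := fun f => by
    obtain ⟨g, hg⟩ := Triangle.coyoneda_exact₃ _ hd f (hT.elim _ _)
    exact ⟨g, hg.symm⟩
  have hw' : Function.Surjective (Linear.leftComp k (T⟦(1 : ℤ)⟧⟦(1 : ℤ)⟧) w) := fun f => by
    obtain ⟨g, hg⟩ := Triangle.yoneda_exact₂ _ hd f (h f)
    exact ⟨g, hg.symm⟩
  have hle : Module.finrank k (T ⟶ Z) ≤ Module.finrank k (T ⟶ W) := by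
    rw [hC.finrank_hom T Z, hC.finrank_hom T W]
    exact LinearMap.finrank_le_finrank_of_surjective hw'
  have hinj : Function.Injective (Linear.rightComp k T w) :=
    (LinearMap.injective_iff_surjective_of_finrank_eq_finrank
      (hle.antisymm (LinearMap.finrank_le_finrank_of_surjective hw))).2 hw
  refine hinj (Eq.trans ?_ (map_zero _).symm)
  exact comp_distTriang_mor_zero₁₂ _ hd

variable [Limits.HasFiniteBiproducts C]

lemma nonempty_rightApproxTriangle (S X : C) : Nonempty (RightApproxTriangle S X) := by
  have := hC.finite_hom S X
  obtain ⟨R, r, hR, hr⟩ := InAdd.exists_right_approx k S X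
  obtain ⟨U, u, δ, hU⟩ := distinguished_cocone_triangle₁ r
  exact ⟨⟨U, R, u, r, δ, hU, hR, hr⟩⟩

lemma nonempty_leftApproxTriangle (S X : C) : Nonempty (LeftApproxTriangle S X) := by
  have := hC.finite_hom X S
  obtain ⟨R, l, hR, hl⟩ := InAdd.exists_left_approx k S X
  obtain ⟨V, v, δ, hV⟩ := distinguished_cocone_triangle l
  exact ⟨⟨R, V, l, v, δ, hV, hR, hl⟩⟩

end IsTwoCalabiYau

lemma IsClusterTilting.inAdd_fiber (hT : IsClusterTilting T) (D : RightApproxTriangle T X) :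
    InAdd T D.fiber :=
  (hT _).1 (D.subsingleton_hom_fiber_shift hT.subsingleton_hom_shift)

end Triangulated

/-! ### The functor `Hom(T, -)` -/

section HomFunctor

open Pretriangulated

open scoped RightActions

variable {C : Type u} [Category.{v} C] [Preadditive C] {A : Type v} [Ring A] {T X Y Z : C}

/-- The functor `Hom(T, -)` with values in right modules over a ring `A` identified with
`End T`. -/
def homFunctor (φ : A ≃+* End T) : C ⥤ ModuleCat.{v} Aᵐᵒᵖ :=
  preadditiveCoyonedaObj T ⋙ ModuleCat.restrictScalars φ.op.toRingHom

variable (φ : A ≃+* End T)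

instance : (homFunctor φ).Additive where
  map_add {X Y f g} := by
    ext x
    exact Preadditive.comp_add _ _ _ x f g

lemma homFunctor_smul (x : (homFunctor φ).obj X) (a : A) :
    x <• a = φ a ≫ (x : T ⟶ X) := rfl

lemma homFunctor_map_eq_zero_iff {f : X ⟶ Y} :
    (homFunctor φ).map f = 0 ↔ ∀ x : T ⟶ X, x ≫ f = 0 :=
  ⟨fun h x => congrArg (fun F => F.hom x) h, fun h => ModuleCat.hom_ext (LinearMap.ext h)⟩

lemma epi_homFunctor_map_iff {f : X ⟶ Y} :
    Epi ((homFunctor φ).map f) ↔ ∀ y : T ⟶ Y, ∃ x : T ⟶ X, x ≫ f = y :=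
  ModuleCat.epi_iff_surjective _

lemma homFunctor_hom_apply {M : ModuleCat.{v} Aᵐᵒᵖ} (η : (homFunctor φ).obj T ⟶ M) (t : T ⟶ T) :
    η t = η (𝟙 T) <• φ.symm t :=
  have ht : t = φ (φ.symm t) ≫ 𝟙 T := by rw [φ.apply_symm_apply, Category.comp_id]
  (congrArg η ht).trans (map_smul η.hom _ _)

lemma exists_homFunctor_map_self_eq (η : (homFunctor φ).obj T ⟶ (homFunctor φ).obj Y) :
    ∃ f, (homFunctor φ).map f = η := by
  refine ⟨η (𝟙 T), ModuleCat.hom_ext (LinearMap.ext fun (t : T ⟶ T) => ?_)⟩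
  refine Eq.trans ?_ (homFunctor_hom_apply φ η t).symm
  rw [homFunctor_smul, φ.apply_symm_apply]
  rfl

/-- The isomorphism of right `A`-modules `Hom(T, T) ≅ A`. -/
def homFunctorSelfIso : (homFunctor φ).obj T ≅ ModuleCat.of Aᵐᵒᵖ A :=
  (LinearEquiv.toModuleIso (X₁ := ModuleCat.of Aᵐᵒᵖ A) (X₂ := (homFunctor φ).obj T)
    { φ.toAddEquiv with map_smul' a x := φ.map_mul x a.unop }).symm

instance : Projective (ModuleCat.of Aᵐᵒᵖ A) :=
  have : Module.Projective Aᵐᵒᵖ A := .of_equiv (MulOpposite.opLinearEquiv Aᵐᵒᵖ (M := A)).symm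
  inferInstance

instance : Projective ((homFunctor φ).obj T) :=
  Projective.of_iso (homFunctorSelfIso φ).symm inferInstance

lemma exists_homFunctor_self_hom {M : ModuleCat.{v} Aᵐᵒᵖ} (m : M) :
    ∃ η : (homFunctor φ).obj T ⟶ M, η (𝟙 T) = m :=
  ⟨(homFunctorSelfIso φ).hom ≫ ModuleCat.ofHom
      (LinearMap.toSpanSingleton Aᵐᵒᵖ M m ∘ₗ (MulOpposite.opLinearEquiv Aᵐᵒᵖ).toLinearMap),
    (congrArg (fun a => m <• a) φ.symm.map_one).trans (one_smul _ m)⟩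

lemma exists_inAdd_epi_homFunctor_hom [Limits.HasFiniteBiproducts C] (M : ModuleCat.{v} Aᵐᵒᵖ)
    [Module.Finite Aᵐᵒᵖ M] : ∃ R, InAdd T R ∧ ∃ q : (homFunctor φ).obj R ⟶ M, Epi q := by
  obtain ⟨n, m, hm⟩ := Module.Finite.exists_fin (R := Aᵐᵒᵖ) (M := M)
  choose η hη using fun j => exists_homFunctor_self_hom φ (m j)
  let q : (homFunctor φ).obj (⨁ fun _ : Fin n => T) ⟶ M :=
    ∑ j, (homFunctor φ).map (Limits.biproduct.π (fun _ => T) j) ≫ η j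
  have hq (j : Fin n) : (homFunctor φ).map (Limits.biproduct.ι (fun _ => T) j) ≫ q = η j := by
    simp only [q, Preadditive.comp_sum, ← Functor.map_comp_assoc]
    rw [Finset.sum_eq_single j (fun i _ hij => by
      rw [Limits.biproduct.ι_π_ne _ hij.symm, Functor.map_zero, Limits.zero_comp]) (by simp),
      Limits.biproduct.ι_π_self, CategoryTheory.Functor.map_id, Category.id_comp]
  refine ⟨_, .biproduct T n, q, (ModuleCat.epi_iff_range_eq_top _).2 (top_le_iff.1 ?_)⟩
  refine hm.ge.trans ?_
  rw [Submodule.span_le]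
  rintro _ ⟨j, rfl⟩
  rw [← hη, ← hq]
  exact ⟨_, rfl⟩

variable [HasShift C ℤ] [Limits.HasZeroObject C] [∀ n : ℤ, (shiftFunctor C n).Additive]
  [Pretriangulated C]

section Exact

variable {f : X ⟶ Y} {g : Y ⟶ Z} {δ : Z ⟶ X⟦(1 : ℤ)⟧}

lemma homFunctor_exact (hd : Triangle.mk f g δ ∈ distTriang C) :
    ((ShortComplex.mk f g (comp_distTriang_mor_zero₁₂ _ hd)).map (homFunctor φ)).Exact := by
  rw [ShortComplex.moduleCat_exact_iff]
  intro (y : T ⟶ Y) hy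
  obtain ⟨x, hx⟩ := Triangle.coyoneda_exact₂ _ hd y hy
  exact ⟨x, hx.symm⟩

lemma epi_homFunctor_map (hd : Triangle.mk f g δ ∈ distTriang C)
    (hX : Subsingleton (T ⟶ X⟦(1 : ℤ)⟧)) : Epi ((homFunctor φ).map g) :=
  (epi_homFunctor_map_iff φ).2 fun z => by
    obtain ⟨y, hy⟩ := Triangle.coyoneda_exact₃ _ hd z (hX.elim _ _)
    exact ⟨y, hy.symm⟩

end Exact

variable (hT : IsClusterTilting T)
include hT

lemma exists_homFunctor_map_eq (D : RightApproxTriangle T X)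
    (η : (homFunctor φ).obj X ⟶ (homFunctor φ).obj Y) : ∃ f, (homFunctor φ).map f = η := by
  obtain ⟨w, hw⟩ := D.inAdd.exists_map_eq (exists_homFunctor_map_self_eq φ)
    ((homFunctor φ).map D.hom ≫ η)
  have hDw : D.incl ≫ w = 0 := by
    refine (hT.inAdd_fiber D).eq_zero_of_forall_comp_eq_zero
      ((homFunctor_map_eq_zero_iff φ).1 ?_)
    rw [Functor.map_comp, hw, ← Functor.map_comp_assoc, D.incl_comp_hom, Functor.map_zero,
      Limits.zero_comp]
  obtain ⟨f, rfl⟩ := D.exists_hom_comp_eq hDw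
  have : Epi ((homFunctor φ).map D.hom) := (epi_homFunctor_map_iff φ).2 D.exists_lift
  exact ⟨f, (cancel_epi ((homFunctor φ).map D.hom)).1 (by rw [← hw, Functor.map_comp])⟩

theorem exists_homFunctor_obj_iso [Limits.HasFiniteBiproducts C] [IsNoetherianRing Aᵐᵒᵖ]
    (M : ModuleCat.{v} Aᵐᵒᵖ) [Module.Finite Aᵐᵒᵖ M] : ∃ Z, Nonempty ((homFunctor φ).obj Z ≅ M) := by
  obtain ⟨R₀, hR₀, q, hq⟩ := exists_inAdd_epi_homFunctor_hom φ M
  have : Module.Finite Aᵐᵒᵖ ((homFunctor φ).obj T) :=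
    .equiv ((MulOpposite.opLinearEquiv Aᵐᵒᵖ).symm.trans (homFunctorSelfIso φ).toLinearEquiv.symm)
  have := (hR₀.map (homFunctor φ)).module_finite
  have : Module.Finite Aᵐᵒᵖ (Limits.kernel q : ModuleCat.{v} Aᵐᵒᵖ) :=
    .of_injective (Limits.kernel.ι q).hom ((ModuleCat.mono_iff_injective _).1 inferInstance)
  obtain ⟨R₁, hR₁, q₁, hq₁⟩ := exists_inAdd_epi_homFunctor_hom φ (Limits.kernel q)
  obtain ⟨z, hz⟩ := hR₁.exists_map_eq (exists_homFunctor_map_self_eq φ) (q₁ ≫ Limits.kernel.ι q)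
  obtain ⟨Z, g, δ, hd⟩ := distinguished_cocone_triangle z
  have : Epi ((ShortComplex.mk z g (comp_distTriang_mor_zero₁₂ _ hd)).map (homFunctor φ)).g :=
    epi_homFunctor_map φ hd ((hT R₁).2 hR₁)
  exact ⟨Z, ⟨Limits.IsColimit.coconePointUniqueUpToIso (homFunctor_exact φ hd).gIsCokernel
    (Limits.isCokernelEpiComp (ShortComplex.exact_kernel q).gIsCokernel q₁ hz)⟩⟩

end HomFunctor

lemma exists_retract_of_isIdempotentElem {C : Type u} [Category.{v} C] [Preadditive C]
    [IsIdempotentComplete C] {T : C} {A : Type v} [Ring A] (φ : A ≃+* End T) {e : A}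
    (he : IsIdempotentElem e) : ∃ (S : C) (ρ : Retract S T), ρ.r ≫ ρ.i = φ e := by
  obtain ⟨S, i, r, hir, hri⟩ :=
    IsIdempotentComplete.idempotents_split T (φ e) ((map_mul φ e e).symm.trans (by rw [he.eq]))
  exact ⟨S, ⟨i, r, hir⟩, hri⟩

section Retract

open Pretriangulated

open scoped RightActions

variable {C : Type u} [Category.{v} C] [Preadditive C] {A : Type v} [Ring A] {S T R X : C}
  {φ : A ≃+* End T} {e : A} {ρ : Retract S T} (hρ : ρ.r ≫ ρ.i = φ e)
include hρ

lemma smul_eq_retract_comp (x : (homFunctor φ).obj X) :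
    x <• e = (ρ.r ≫ ρ.i ≫ x : T ⟶ X) := by
  rw [homFunctor_smul, ← hρ]
  exact Category.assoc _ _ _

lemma idealTrace_homFunctor_le_iff {P : Submodule Aᵐᵒᵖ ((homFunctor φ).obj X)} :
    idealTrace e ((homFunctor φ).obj X) ≤ P ↔ ∀ h : S ⟶ X, (ρ.r ≫ h : T ⟶ X) ∈ P := by
  rw [idealTrace_le_iff]
  refine ⟨fun H h => ?_, fun H x => ?_⟩
  · let x : (homFunctor φ).obj X := (ρ.r ≫ h : T ⟶ X)
    have hx : x <• e = x := (smul_eq_retract_comp hρ x).trans (ρ.r ≫= ρ.retract_assoc h)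
    have := H x
    rwa [hx] at this
  · rw [smul_eq_retract_comp hρ]
    exact H _

lemma idealTrace_homFunctor_eq_bot_iff :
    idealTrace e ((homFunctor φ).obj X) = ⊥ ↔ Subsingleton (S ⟶ X) := by
  rw [← le_bot_iff, idealTrace_homFunctor_le_iff hρ]
  refine ⟨fun H => subsingleton_of_forall_eq 0 fun h => ?_, fun H h => ?_⟩
  · rw [← ρ.retract_assoc h, show ρ.r ≫ h = 0 from H h, Limits.comp_zero]
  · rw [H.elim h 0, Limits.comp_zero]
    exact zero_mem _

lemma comp_mem_idealTrace (hR : InAdd S R) (x : T ⟶ R) (h : R ⟶ X) :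
    (x ≫ h : T ⟶ X) ∈ idealTrace e ((homFunctor φ).obj X) := by
  obtain ⟨n, s, r, hsr⟩ := hR
  rw [← Category.id_comp h, ← hsr, Preadditive.sum_comp, Preadditive.comp_sum]
  refine Submodule.sum_mem _ fun j _ => ?_
  let y : (homFunctor φ).obj X := (ρ.r ≫ r j ≫ h : T ⟶ X)
  have hj : (x ≫ (s j ≫ r j) ≫ h : T ⟶ X) = y <• φ.symm (x ≫ s j ≫ ρ.i : T ⟶ T) := by
    rw [homFunctor_smul, φ.apply_symm_apply]
    simp [y]
  rw [hj]
  exact Submodule.smul_mem _ _ ((idealTrace_homFunctor_le_iff hρ).1 le_rfl _)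

lemma idealTrace_homFunctor_le_map {Y : C} {f : Y ⟶ X}
    (hf : ∀ h : S ⟶ X, ∃ g : S ⟶ Y, g ≫ f = h) :
    idealTrace e ((homFunctor φ).obj X) ≤
      (idealTrace e ((homFunctor φ).obj Y)).map ((homFunctor φ).map f).hom :=
  (idealTrace_homFunctor_le_iff hρ).2 fun h => by
    obtain ⟨g, rfl⟩ := hf h
    exact ⟨_, (idealTrace_homFunctor_le_iff hρ).1 le_rfl g, Category.assoc _ _ _⟩

lemma mono_quotientTrace_map_homFunctor_map {Y : C} {f : Y ⟶ X}
    (hf : ∀ h : S ⟶ X, ∃ g : S ⟶ Y, g ≫ f = h)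
    (hker : ∀ y : T ⟶ Y, y ≫ f = 0 → y ∈ idealTrace e ((homFunctor φ).obj Y)) :
    Mono ((quotientTrace e).map ((homFunctor φ).map f)) := by
  refine (ModuleCat.mono_iff_injective _).2 ((injective_iff_map_eq_zero _).2 fun x hx => ?_)
  obtain ⟨y, rfl⟩ := Submodule.mkQ_surjective _ x
  obtain ⟨t, ht, hty⟩ := idealTrace_homFunctor_le_map hρ hf
    ((Submodule.Quotient.mk_eq_zero _).1 hx)
  have hyt : ((homFunctor φ).map f).hom (y - t) = 0 := by
    rw [map_sub, sub_eq_zero]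
    exact hty.symm
  refine (Submodule.Quotient.mk_eq_zero _).2 ?_
  rw [← sub_add_cancel y t]
  exact add_mem (hker _ hyt) ht

variable [HasShift C ℤ] [Limits.HasZeroObject C] [∀ n : ℤ, (shiftFunctor C n).Additive]
  [Pretriangulated C]

lemma range_homFunctor_map_hom (D : RightApproxTriangle S X) :
    LinearMap.range ((homFunctor φ).map D.hom).hom = idealTrace e ((homFunctor φ).obj X) := by
  refine le_antisymm ?_ ((idealTrace_homFunctor_le_map hρ D.exists_lift).trans
    LinearMap.map_le_range)
  rintro _ ⟨x, rfl⟩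
  exact comp_mem_idealTrace hρ D.inAdd x D.hom

lemma ker_homFunctor_map_δ (D : RightApproxTriangle S X) :
    LinearMap.ker ((homFunctor φ).map D.δ).hom = idealTrace e ((homFunctor φ).obj X) := by
  rw [← range_homFunctor_map_hom hρ D]
  exact ((ShortComplex.moduleCat_exact_iff_range_eq_ker _).1
    (homFunctor_exact φ (rot_of_distTriang _ D.distinguished))).symm

lemma nonempty_quotientTrace_homFunctor_iso (D : RightApproxTriangle S X)
    (hT : Subsingleton (T ⟶ D.approx⟦(1 : ℤ)⟧)) :
    Nonempty ((quotientTrace e).obj ((homFunctor φ).obj X) ≅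
      (homFunctor φ).obj (D.fiber⟦(1 : ℤ)⟧)) := by
  have : Epi ((homFunctor φ).map D.δ) :=
    epi_homFunctor_map φ (rot_of_distTriang _ D.distinguished) hT
  exact ⟨((Submodule.quotEquivOfEq _ _ (ker_homFunctor_map_δ hρ D).symm).trans
    (((homFunctor φ).map D.δ).hom.quotKerEquivOfSurjective
      ((ModuleCat.epi_iff_surjective _).1 this))).toModuleIso⟩

lemma subsingleton_ext_idealTrace_one (D : RightApproxTriangle S T) {N : ModuleCat.{v} Aᵐᵒᵖ}
    (h : ∀ f : (homFunctor φ).obj D.fiber ⟶ N, ∃ f', (homFunctor φ).map D.incl ≫ f' = f) :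
    Subsingleton (Abelian.Ext (ModuleCat.of Aᵐᵒᵖ (idealTrace e A)) N 1) := by
  have hS := ((InAdd.of_retract ρ).map (homFunctor φ)).projective
  have hR := (D.inAdd.map (homFunctor φ)).projective
  have hI := subsingleton_ext_range_one_of_forall_extends
    (homFunctor_exact φ D.distinguished) hR h
  have hrange := range_homFunctor_map_hom hρ D
  let E : ModuleCat.of Aᵐᵒᵖ (idealTrace e A) ≅
      ModuleCat.of Aᵐᵒᵖ (LinearMap.range ((homFunctor φ).map D.hom).hom) :=
    ((homFunctorSelfIso φ).symm.toLinearEquiv.ofSubmodules _ _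
      ((map_idealTrace_equiv e _).trans hrange.symm)).toModuleIso
  exact (InAdd.of_retract (.ofIso E)).subsingleton_ext_left hI

end Retract

/-! ### Vanishing of `Ext¹(A e A, -)` over 2-Calabi-Yau tilted algebras -/

section TwoCalabiYauTilted

open Pretriangulated

variable {C : Type u} [Category.{v} C] [Preadditive C] [HasShift C ℤ] [Limits.HasZeroObject C]
  [∀ n : ℤ, (shiftFunctor C n).Additive] [Pretriangulated C] {A : Type v} [Ring A] {S T X Z : C}
  {φ : A ≃+* End T} {e : A} {ρ : Retract S T}

section ClusterTilting

variable (hT : IsClusterTilting T) (hρ : ρ.r ≫ ρ.i = φ e) (L : LeftApproxTriangle S T)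
  (E : RightApproxTriangle T (L.cofiber⟦(1 : ℤ)⟧))
include hT hρ

lemma mem_idealTrace_of_comp_incl_eq_zero {z : T ⟶ E.fiber} (hz : z ≫ E.incl = 0) :
    (z : T ⟶ E.fiber) ∈ idealTrace e ((homFunctor φ).obj E.fiber) := by
  have hz' : z⟦(1 : ℤ)⟧' ≫ E.incl⟦(1 : ℤ)⟧' = 0 := by
    rw [← Functor.map_comp, hz, Functor.map_zero]
  obtain ⟨w, hw⟩ : ∃ w : T⟦(1 : ℤ)⟧ ⟶ L.cofiber⟦(1 : ℤ)⟧, z⟦(1 : ℤ)⟧' = w ≫ E.δ :=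
    Triangle.coyoneda_exact₁ _ E.distinguished _ hz'
  obtain ⟨w, rfl⟩ := (shiftFunctor C (1 : ℤ)).map_surjective w
  obtain ⟨y, rfl⟩ : ∃ y : T ⟶ L.approx, w = y ≫ L.proj :=
    Triangle.coyoneda_exact₃ _ L.distinguished w (hT.subsingleton_hom_shift.elim _ _)
  obtain ⟨t, ht⟩ := (shiftFunctor C (1 : ℤ)).map_surjective (L.proj⟦(1 : ℤ)⟧' ≫ E.δ)
  have hzt : z = y ≫ t := (shiftFunctor C (1 : ℤ)).map_injective (by
    rw [hw, Functor.map_comp, Functor.map_comp, ht, Category.assoc])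
  exact hzt ▸ comp_mem_idealTrace hρ L.inAdd y t

lemma shortExact_quotientTrace_homFunctor (hL : Subsingleton (S ⟶ L.cofiber⟦(1 : ℤ)⟧)) :
    ((ShortComplex.mk E.incl E.hom E.incl_comp_hom).map
      (homFunctor φ ⋙ quotientTrace e)).ShortExact := by
  have hepi : Epi ((homFunctor φ).map E.hom) := (epi_homFunctor_map_iff φ).2 E.exists_lift
  have hlift (h : S ⟶ E.approx) : ∃ g : S ⟶ E.fiber, g ≫ E.incl = h := by
    obtain ⟨g, hg⟩ := Triangle.coyoneda_exact₂ _ E.distinguished h (hL.elim _ _)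
    exact ⟨g, hg.symm⟩
  exact
    { exact := quotientTrace_exact (homFunctor_exact φ E.distinguished) hepi
      mono_f := mono_quotientTrace_map_homFunctor_map hρ hlift fun _ =>
        mem_idealTrace_of_comp_incl_eq_zero hT hρ L E
      epi_g := inferInstanceAs (Epi ((quotientTrace e).map ((homFunctor φ).map E.hom))) }

end ClusterTilting

variable [Limits.HasFiniteBiproducts C] {k : Type*} [Field k] [Linear k C]
  (hC : IsTwoCalabiYau C k) (hT : IsClusterTilting T)
include hC hT

variable (φ) in
lemma full_homFunctor : (homFunctor φ).Full where
  map_surjective {X _} η :=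
    have ⟨D⟩ := hC.nonempty_rightApproxTriangle T X
    exists_homFunctor_map_eq φ hT D η

lemma exists_homFunctor_map_incl_comp_eq (D : RightApproxTriangle S T)
    (f : (homFunctor φ).obj D.fiber ⟶ (homFunctor φ).obj T) :
    ∃ f', (homFunctor φ).map D.incl ≫ f' = f := by
  have := full_homFunctor φ hC hT
  obtain ⟨f, rfl⟩ := (homFunctor φ).map_surjective f
  obtain ⟨f', rfl⟩ := exists_comp_eq_of_distinguished D.distinguished hT.subsingleton_hom_shift f
  exact ⟨(homFunctor φ).map f', ((homFunctor φ).map_comp _ _).symm⟩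

variable (hρ : ρ.r ≫ ρ.i = φ e)
include hρ

lemma subsingleton_homFunctor_fiber_hom_quotientTrace (D : RightApproxTriangle S T) :
    Subsingleton ((homFunctor φ).obj D.fiber ⟶
      (quotientTrace e).obj ((homFunctor φ).obj T)) := by
  have hTS := hT.subsingleton_hom_retract_shift ρ
  have hSS := (InAdd.of_retract ρ).subsingleton_hom_left hTS
  have hTR := (D.inAdd.map (shiftFunctor C (1 : ℤ))).subsingleton_hom_right hTS
  obtain ⟨E⟩ := nonempty_quotientTrace_homFunctor_iso hρ D hTR
  have hUS := hC.subsingleton_hom_shift_symm (D.subsingleton_hom_fiber_shift hSS)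
  have hUU := D.subsingleton_fiber_hom_fiber_shift hT.subsingleton_hom_shift hSS hUS
  have := full_homFunctor φ hC hT
  have hHU := ((homFunctor φ).map_surjective (X := D.fiber) (Y := D.fiber⟦(1 : ℤ)⟧)).subsingleton
  exact E.homToEquiv.injective.subsingleton

theorem subsingleton_homFunctor_fiber_hom (D : RightApproxTriangle S T)
    (hSZ : Subsingleton (S ⟶ Z))
    (hZ : Subsingleton (Abelian.Ext ((homFunctor φ).obj Z)
      ((quotientTrace e).obj ((homFunctor φ).obj T)) 1)) :
    Subsingleton ((homFunctor φ).obj D.fiber ⟶ (homFunctor φ).obj Z) := by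
  obtain ⟨L⟩ := hC.nonempty_leftApproxTriangle S T
  obtain ⟨E⟩ := hC.nonempty_rightApproxTriangle T (L.cofiber⟦(1 : ℤ)⟧)
  have hSS := (InAdd.of_retract ρ).subsingleton_hom_left (hT.subsingleton_hom_retract_shift ρ)
  have hSV := hC.subsingleton_hom_shift_symm (L.subsingleton_cofiber_hom_shift hSS)
  have hG := shortExact_quotientTrace_homFunctor hT hρ L E hSV
  have := mono_toQuotientTrace ((idealTrace_homFunctor_eq_bot_iff hρ).2 hSV)
  have hUG := (E.inAdd.map (homFunctor φ ⋙ quotientTrace e)).subsingleton_hom_right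
    (subsingleton_homFunctor_fiber_hom_quotientTrace hC hT hρ D)
  have hZG := ((hT.inAdd_fiber E).map (homFunctor φ ⋙ quotientTrace e)).subsingleton_ext_right hZ
  have := full_homFunctor φ hC hT
  refine subsingleton_of_forall_eq 0 fun η => ?_
  obtain ⟨f, rfl⟩ := (homFunctor φ).map_surjective η
  have hf (g : Z ⟶ L.cofiber⟦(1 : ℤ)⟧) : (homFunctor φ).map (f ≫ g) = 0 := by
    obtain ⟨q, hq⟩ := exists_comp_g_eq_of_subsingleton_ext hG hZG
      ((homFunctor φ).map g ≫ toQuotientTrace e _)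
    rw [← cancel_mono (toQuotientTrace e _), Functor.map_comp, Category.assoc, Limits.zero_comp]
    exact (_ ≫= hq).symm.trans ((Category.assoc _ _ _).symm.trans
      ((hUG.elim _ 0 =≫ _).trans Limits.zero_comp))
  refine (homFunctor_map_eq_zero_iff φ).2 fun y =>
    hC.eq_zero_of_forall_comp_eq_zero hT.subsingleton_hom_shift fun g => ?_
  obtain ⟨g, rfl⟩ := L.exists_comp_δ_shift_eq (hC.subsingleton_hom_shift_shift hSZ) g
  have hy := (homFunctor_map_eq_zero_iff φ).1 (hf g) y
  rw [← Category.assoc, Category.assoc y, hy, Limits.zero_comp]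

lemma subsingleton_ext_idealTrace_self :
    Subsingleton (Abelian.Ext (ModuleCat.of Aᵐᵒᵖ (idealTrace e A)) (ModuleCat.of Aᵐᵒᵖ A) 1) :=
  have ⟨D⟩ := hC.nonempty_rightApproxTriangle S T
  (InAdd.of_retract (.ofIso (homFunctorSelfIso φ).symm)).subsingleton_ext_right
    (subsingleton_ext_idealTrace_one hρ D (exists_homFunctor_map_incl_comp_eq hC hT D))

lemma subsingleton_ext_idealTrace_quotientTrace_self :
    Subsingleton (Abelian.Ext (ModuleCat.of Aᵐᵒᵖ (idealTrace e A))
      ((quotientTrace e).obj (ModuleCat.of Aᵐᵒᵖ A)) 1) :=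
  have ⟨D⟩ := hC.nonempty_rightApproxTriangle S T
  have hD := subsingleton_homFunctor_fiber_hom_quotientTrace hC hT hρ D
  (InAdd.of_retract (.ofIso
    ((quotientTrace e).mapIso (homFunctorSelfIso φ).symm))).subsingleton_ext_right
    (subsingleton_ext_idealTrace_one hρ D fun _ => ⟨0, hD.elim _ _⟩)

theorem subsingleton_ext_idealTrace [IsNoetherianRing Aᵐᵒᵖ] {M : ModuleCat.{v} Aᵐᵒᵖ}
    [Module.Finite Aᵐᵒᵖ M] (hM : idealTrace e M = ⊥)
    (hMA : Subsingleton (Abelian.Ext M ((quotientTrace e).obj (ModuleCat.of Aᵐᵒᵖ A)) 1)) :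
    Subsingleton (Abelian.Ext (ModuleCat.of Aᵐᵒᵖ (idealTrace e A)) M 1) := by
  obtain ⟨D⟩ := hC.nonempty_rightApproxTriangle S T
  obtain ⟨Z, ⟨E⟩⟩ := exists_homFunctor_obj_iso φ hT M
  have hSZ : Subsingleton (S ⟶ Z) := (idealTrace_homFunctor_eq_bot_iff hρ).1 <| by
    rw [← map_idealTrace_equiv e E.symm.toLinearEquiv, hM, Submodule.map_bot]
  have hZ := (InAdd.of_retract (.ofIso
    ((quotientTrace e).mapIso (homFunctorSelfIso φ)))).subsingleton_ext_right
    ((InAdd.of_retract (.ofIso E)).subsingleton_ext_left hMA)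
  have hD := subsingleton_homFunctor_fiber_hom hC hT hρ D hSZ hZ
  exact (InAdd.of_retract (.ofIso E.symm)).subsingleton_ext_right
    (subsingleton_ext_idealTrace_one hρ D fun _ => ⟨0, hD.elim _ _⟩)

end TwoCalabiYauTilted

section CYTilted

variable {k A : Type} [Field k] [Ring A] [Algebra k A]

lemma IsCYTilted.finiteDimensional (hA : IsCYTilted k A) : FiniteDimensional k A := by
  obtain ⟨W⟩ := hA
  let := W.cat
  let := W.pre
  let := W.lin
  have : Module.Finite k (End W.T) := W.homFinite W.T W.T
  obtain ⟨φ⟩ := W.algIso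
  exact Module.Finite.equiv φ.symm.toLinearEquiv

theorem IsCYTilted.subsingleton_ext_genIdeal (hA : IsCYTilted k A) {e : A}
    (he : IsIdempotentElem e) :
    Subsingleton (Abelian.Ext (ModuleCat.of Aᵐᵒᵖ (genIdeal e)) (ModuleCat.of Aᵐᵒᵖ A) 1) ∧
    Subsingleton (Abelian.Ext (ModuleCat.of Aᵐᵒᵖ (genIdeal e))
      (ModuleCat.of Aᵐᵒᵖ (A ⧸ genIdeal e)) 1) ∧
    ∀ (M : ModuleCat.{0} Aᵐᵒᵖ) [Module.Finite Aᵐᵒᵖ M], JTriv e M →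
      Subsingleton (Abelian.Ext M (ModuleCat.of Aᵐᵒᵖ (A ⧸ genIdeal e)) 1) →
      Subsingleton (Abelian.Ext (ModuleCat.of Aᵐᵒᵖ (genIdeal e)) M 1) := by
  have := hA.finiteDimensional
  have : IsNoetherianRing Aᵐᵒᵖ := .of_finite k Aᵐᵒᵖ
  obtain ⟨W⟩ := hA
  let := W.cat
  let := W.pre
  let := W.lin
  let := W.shift
  have := W.zero
  have := W.shiftAdd
  let := W.tri
  have := W.biprod
  have := W.idem
  obtain ⟨φ⟩ := W.algIso
  have hC : IsTwoCalabiYau W.C k := ⟨W.homFinite, W.serre⟩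
  have hT : IsClusterTilting W.T := fun X =>
    (subsingleton_iff_forall_eq 0).trans
      ((W.clusterTilting X).trans InAdd.iff_exists_biproduct.symm)
  obtain ⟨S, ρ, hρ⟩ := exists_retract_of_isIdempotentElem φ.toRingEquiv he
  exact ⟨subsingleton_ext_idealTrace_self hC hT hρ,
    subsingleton_ext_idealTrace_quotientTrace_self hC hT hρ,
    fun M _ hM hMB =>
      subsingleton_ext_idealTrace hC hT hρ (jTriv_iff_idealTrace_eq_bot.1 hM) hMB⟩

end CYTilted

theorem functor_F_is_dense_general
    (k A : Type) [Field k] [Ring A] [Algebra k A]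
    (hA : IsCYTilted k A) (e : A) (he : IsIdempotentElem e)
    (Y : ModuleCat.{0} Aᵐᵒᵖ) [Module.Finite Aᵐᵒᵖ Y] (hYtriv : JTriv e Y)
    (hYCM : ∀ (E : ModuleCat.{0} Aᵐᵒᵖ) (u : (A ⧸ genIdeal e) →ₗ[Aᵐᵒᵖ] E)
      (v : E →ₗ[Aᵐᵒᵖ] Y), JTriv e E → Function.Injective u → Function.Surjective v →
      Function.Exact u v → ∃ s : Y →ₗ[Aᵐᵒᵖ] E, v ∘ₗ s = LinearMap.id) :
    ∃ (JX X : ModuleCat.{0} Aᵐᵒᵖ) (f : JX →ₗ[Aᵐᵒᵖ] X) (g : X →ₗ[Aᵐᵒᵖ] Y),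
      Function.Injective f ∧ Function.Surjective g ∧ Function.Exact f g ∧
      IsAddJApprox e JX X f ∧
      IsCM k A X ∧
      Subsingleton (rext1 k A (ModuleCat.of Aᵐᵒᵖ ↥(genIdeal e)) X) ∧
      Subsingleton (rext1 k A X (ModuleCat.of Aᵐᵒᵖ ↥(genIdeal e))) ∧
      Nonempty ((X ⧸ LinearMap.range f) ≃ₗ[Aᵐᵒᵖ] Y) := by
  have := hA.finiteDimensional
  have : IsNoetherianRing Aᵐᵒᵖ := .of_finite k Aᵐᵒᵖ
  have hYB := subsingleton_ext_quotient_genIdeal_of_forall_split he hYtriv hYCM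
  obtain ⟨hJA, hJB, hJ⟩ := hA.subsingleton_ext_genIdeal he
  obtain ⟨n, q, hq⟩ := Module.Finite.exists_fin' Aᵐᵒᵖ Y
  have : Module.Finite Aᵐᵒᵖ A := .of_restrictScalars_finite k Aᵐᵒᵖ A
  have := finite_moduleCat_hom k q.shortComplexKer.X₁ (.of Aᵐᵒᵖ (genIdeal e))
  obtain ⟨JX, X, f, g, w, hS, hJX, hXA, hJX', hXJ⟩ := exists_extension_inAdd_subsingleton_ext k
    (shortExact_genIdeal_quotient e) (LinearMap.shortExact_shortComplexKer hq)
    (jTriv_quotient_idealTrace.subsingleton_genIdeal_hom he) hJA hJB (hJ Y hYtriv hYB) hYB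
  have hfg : Function.Exact f.hom g.hom :=
    (ShortComplex.ShortExact.moduleCat_exact_iff_function_exact _).1 hS.exact
  exact ⟨JX, X, f.hom, g.hom, hS.moduleCat_injective_f, hS.moduleCat_surjective_g, hfg,
    isAddJApprox_of_shortExact he hS hJX hYtriv,
    subsingleton_rext1_of_subsingleton_ext k A hXA,
    subsingleton_rext1_of_subsingleton_ext k A hJX',
    subsingleton_rext1_of_subsingleton_ext k A hXJ,
    ⟨hfg.linearEquivOfSurjective hS.moduleCat_surjective_g⟩⟩

/-- Let `A` be a 2-Calabi-Yau tilted algebra, `J = A e A`, `B = A/J`.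
For every Cohen-Macaulay `B`-module `Y` there is a short exact sequence of `A`-modules
`0 → J_X → X → Y → 0` with `J_X ∈ add J`, `X ∈ J^⊥`, and `J_X → X` an
`add J`-approximation of `X`; in particular `F(X) ≅ Y`, so `F : J^⊥ → CMP B` is dense. -/
theorem functor_F_is_dense
    (k A : Type) [Field k] [IsAlgClosed k] [Ring A] [Algebra k A] [FiniteDimensional k A]
    (hA : IsCYTilted k A) (e : A) (he : IsPrimitiveIdempotent e)
    (Y : ModuleCat.{0} Aᵐᵒᵖ) [Module.Finite Aᵐᵒᵖ Y] (hYtriv : JTriv e Y)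
    -- `Y` is Cohen-Macaulay over `B`: every extension of `B` by `Y` in `mod B` splits
    (hYCM : ∀ (E : ModuleCat.{0} Aᵐᵒᵖ) (u : (A ⧸ genIdeal e) →ₗ[Aᵐᵒᵖ] E)
      (v : E →ₗ[Aᵐᵒᵖ] Y), JTriv e E → Function.Injective u → Function.Surjective v →
      Function.Exact u v → ∃ s : Y →ₗ[Aᵐᵒᵖ] E, v ∘ₗ s = LinearMap.id) :
    ∃ (JX X : ModuleCat.{0} Aᵐᵒᵖ) (f : JX →ₗ[Aᵐᵒᵖ] X) (g : X →ₗ[Aᵐᵒᵖ] Y),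
      Function.Injective f ∧ Function.Surjective g ∧ Function.Exact f g ∧
      IsAddJApprox e JX X f ∧
      IsCM k A X ∧
      Subsingleton (rext1 k A (ModuleCat.of Aᵐᵒᵖ ↥(genIdeal e)) X) ∧
      Subsingleton (rext1 k A X (ModuleCat.of Aᵐᵒᵖ ↥(genIdeal e))) ∧
      Nonempty ((X ⧸ LinearMap.range f) ≃ₗ[Aᵐᵒᵖ] Y) :=
  functor_F_is_dense_general k A hA e he.1 Y hYtriv hYCM
end
end

section
/- Let 0 → J → X₂ → X₁ → 0 be a non-split short exact sequence of A-modules with Ext^1_A(J, J) = 0. Then the connecting map gives dim Ext^1_A(X₁, J) > dim Ext^1_A(X₂, J); that is, the dimension of the first extension group with J strictly drops. -/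
noncomputable section

open CategoryTheory Opposite DirectSum MulOpposite

/-!
Applying `Hom(-, J)` to `0 → J → X₂ → X₁ → 0` gives
`Hom(J, J) → Ext¹(X₁, J) → Ext¹(X₂, J) → Ext¹(J, J) = 0`, and `id_J` is sent to the class of the
extension, which is nonzero because the sequence does not split. The surjection
`Ext¹(X₁, J) → Ext¹(X₂, J)` therefore has a nonzero kernel, and the dimension drops strictly since
`Ext¹(X₁, J)` is finite dimensional: it is a quotient of `Hom(K, J)`, where `K` is the kernel of a
surjection onto `X₁` from a finite free module.

Mathlib's long exact sequence concerns `Abelian.Ext`, defined through the derived category. It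
applies to the left derived functor `Ext` because a projective resolution computes both.
-/

universe t w v u

section ExtComparison

variable {R : Type t} [Ring R]

/-- Homology of a short complex of modules, presented by any linear map out of the cycles that is
surjective with kernel the boundaries. -/
def homologyLinearEquivOfSurjective (S : ShortComplex (ModuleCat.{v} R)) {E : Type*}
    [AddCommGroup E] [Module R E] (φ : LinearMap.ker S.g.hom →ₗ[R] E)
    (hφ : Function.Surjective φ) (hker : LinearMap.ker φ = LinearMap.range S.moduleCatToCycles) :
    S.homology ≃ₗ[R] E :=
  S.moduleCatHomologyIso.toLinearEquiv ≪≫ₗ Submodule.quotEquivOfEq _ _ hker.symm ≪≫ₗ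
    φ.quotKerEquivOfSurjective hφ

variable {C : Type u} [Category.{v} C] [Abelian C] [Linear R C] [HasExt.{w} C] {X Y : C}

theorem smul_extMk (P : ProjectiveResolution X) {n m : ℕ} (r : R) (f : P.complex.X n ⟶ Y)
    (hm : n + 1 = m) (hf : P.complex.d m n ≫ f = 0) :
    r • P.extMk f m hm hf = P.extMk (r • f) m hm (by simp [hf]) := by
  simp [Abelian.Ext.smul_eq_comp_mk₀, P.extMk_comp_mk₀]

variable (R Y) in
/-- The class in `Abelian.Ext X Y n` of a degree `n` cocycle with values in `Y` on a projective
resolution of `X`: the linear form of `ProjectiveResolution.extMk`. -/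
def cocyclesToExt (P : ProjectiveResolution X) (n : ℕ) :
    LinearMap.ker (Linear.leftComp R Y (P.complex.d (n + 1) n)) →ₗ[R] Abelian.Ext X Y n where
  toFun f := P.extMk f.1 (n + 1) rfl f.2
  map_add' f g := (P.add_extMk f.1 g.1 (n + 1) rfl f.2 g.2).symm
  map_smul' r f := (smul_extMk P r f.1 rfl f.2).symm

theorem cocyclesToExt_surjective (P : ProjectiveResolution X) (n : ℕ) :
    Function.Surjective (cocyclesToExt R Y P n) := fun α ↦
  have ⟨f, hf, hα⟩ := P.extMk_surjective α (n + 1) rfl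
  ⟨⟨f, hf⟩, hα⟩

theorem cocyclesToExt_succ_eq_zero_iff (P : ProjectiveResolution X) (n : ℕ)
    (f : LinearMap.ker (Linear.leftComp R Y (P.complex.d (n + 2) (n + 1)))) :
    cocyclesToExt R Y P (n + 1) f = 0 ↔ ∃ g, P.complex.d (n + 1) n ≫ g = f.1 :=
  P.extMk_eq_zero_iff f.1 (n + 2) rfl f.2 n rfl

variable (R) in
/-- In positive degrees, the left derived functor `Ext` agrees with the group `Abelian.Ext` of
morphisms in the derived category. -/
def extSuccLinearEquiv [EnoughProjectives C] (X Y : C) (n : ℕ) :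
    ((Ext R C (n + 1)).obj (op X)).obj Y ≃ₗ[R] Abelian.Ext X Y (n + 1) :=
  let P := projectiveResolution X
  let K := P.complex.linearYonedaObj R Y
  (P.isoExt (n + 1) Y ≪≫ K.homologyIsoSc' n (n + 1) (n + 2) (by simp) (by simp)).toLinearEquiv ≪≫ₗ
    homologyLinearEquivOfSurjective (K.sc' n (n + 1) (n + 2)) (cocyclesToExt R Y P (n + 1))
      (cocyclesToExt_surjective P (n + 1)) (by
        ext f
        exact (cocyclesToExt_succ_eq_zero_iff P n f).trans
          ⟨fun ⟨g, hg⟩ ↦ ⟨g, Subtype.ext hg⟩, fun ⟨g, hg⟩ ↦ ⟨g, congrArg Subtype.val hg⟩⟩)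

end ExtComparison

section ShortExact

variable {C : Type u} [Category.{v} C] [Abelian C] [HasExt.{w} C] {S : ShortComplex C}

theorem extClass_ne_zero_of_not_isSplitMono (hS : S.ShortExact) (hf : ¬ IsSplitMono S.f) :
    hS.extClass ≠ 0 := by
  intro hzero
  obtain ⟨α, hα⟩ := Abelian.Ext.contravariant_sequence_exact₁ hS S.X₁
    (Abelian.Ext.mk₀ (𝟙 S.X₁)) (add_zero 1) (by simp [hzero])
  obtain ⟨r, rfl⟩ := (Abelian.Ext.mk₀_bijective _ _).surjective α
  exact hf ⟨⟨r, (Abelian.Ext.mk₀_bijective _ _).injective (by simpa using hα)⟩⟩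

section CommRing

variable (k : Type t) [CommRing k] [Linear k C]

theorem precompOfLinear_mk₀_g_surjective (hS : S.ShortExact) (Y : C) (n : ℕ)
    [Subsingleton (Abelian.Ext S.X₁ Y n)] :
    Function.Surjective ((Abelian.Ext.mk₀ S.g).precompOfLinear k Y (zero_add n)) := fun α ↦
  Abelian.Ext.contravariant_sequence_exact₂ hS Y α (Subsingleton.elim _ _)

theorem finite_ext_succ_of_projective (hS : S.ShortExact) [Projective S.X₂] (Y : C) (n : ℕ)
    [Module.Finite k (Abelian.Ext S.X₁ Y n)] : Module.Finite k (Abelian.Ext S.X₃ Y (n + 1)) :=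
  .of_surjective (hS.extClass.precompOfLinear k Y (add_comm 1 n)) fun α ↦
    Abelian.Ext.contravariant_sequence_exact₃ hS Y α (Abelian.Ext.eq_zero_of_projective _)
      (add_comm 1 n)

end CommRing

theorem finrank_ext_one_lt_of_not_isSplitMono (k : Type t) [Field k] [Linear k C]
    (hS : S.ShortExact) (hf : ¬ IsSplitMono S.f) [Subsingleton (Abelian.Ext S.X₁ S.X₁ 1)]
    [Module.Finite k (Abelian.Ext S.X₃ S.X₁ 1)] :
    Module.finrank k (Abelian.Ext S.X₂ S.X₁ 1) < Module.finrank k (Abelian.Ext S.X₃ S.X₁ 1) := by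
  let T := (Abelian.Ext.mk₀ S.g).precompOfLinear k S.X₁ (zero_add 1)
  have hT : Function.Surjective T := precompOfLinear_mk₀_g_surjective k hS S.X₁ 1
  have hclass : T hS.extClass = T 0 := hS.comp_extClass.trans (map_zero T).symm
  have : Module.Finite k (Abelian.Ext S.X₂ S.X₁ 1) := .of_surjective T hT
  refine (LinearMap.finrank_le_finrank_of_surjective hT).lt_of_ne fun heq ↦ ?_
  have hinj : Function.Injective T :=
    (LinearMap.injective_iff_surjective_of_finrank_eq_finrank heq.symm).2 hT
  exact extClass_ne_zero_of_not_isSplitMono hS hf (hinj hclass)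

end ShortExact

section Modules

theorem finite_linearMap_of_finite (R S M N : Type*) [Ring R] [Ring S] [IsNoetherianRing S]
    [AddCommGroup M] [Module R M] [Module.Finite R M] [AddCommGroup N] [Module R N] [Module S N]
    [SMulCommClass R S N] [Module.Finite S N] : Module.Finite S (M →ₗ[R] N) := by
  obtain ⟨_, p, hp⟩ := Module.Finite.exists_fin' R M
  exact .of_injective (LinearMap.lcomp S N p) fun _ _ h ↦ (LinearMap.cancel_right hp).1 h

open scoped ModuleCat

variable {k : Type t} [Field k] {A : Type v} [Ring A] [Algebra k A]

theorem finite_ext_one_of_finitePresentation (M N : ModuleCat.{v} A)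
    [Module.FinitePresentation A M] [Module.Finite k N] :
    Module.Finite k (Abelian.Ext M N 1) := by
  obtain ⟨n, p, hp⟩ := Module.Finite.exists_fin' A M
  have : Module.Finite A (LinearMap.ker p) := .of_fg (Module.FinitePresentation.fg_ker p hp)
  have : Module.Finite k (LinearMap.ker p →ₗ[A] N) := finite_linearMap_of_finite A k _ N
  have : Module.Finite k (Abelian.Ext (ModuleCat.of A (LinearMap.ker p)) N 0) :=
    .equiv (Abelian.Ext.linearEquiv₀ ≪≫ₗ ModuleCat.homLinearEquiv).symm
  exact finite_ext_succ_of_projective k (LinearMap.shortExact_shortComplexKer hp) N 0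

theorem ext1_dim_drop_general (J X₁ X₂ : ModuleCat.{v} A)
    [Module.Finite k J] [Module.FinitePresentation A X₁]
    (hJ : Subsingleton (((Ext k (ModuleCat.{v} A) 1).obj (op J)).obj J))
    (u : J →ₗ[A] X₂) (v : X₂ →ₗ[A] X₁)
    (hu : Function.Injective u) (hv : Function.Surjective v) (huv : Function.Exact u v)
    (hnonsplit : ¬ ∃ r : X₂ →ₗ[A] J, r ∘ₗ u = LinearMap.id) :
    Module.finrank k (((Ext k (ModuleCat.{v} A) 1).obj (op X₂)).obj J) <
      Module.finrank k (((Ext k (ModuleCat.{v} A) 1).obj (op X₁)).obj J) := by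
  let S := ModuleCat.shortComplexOfCompEqZero u v huv.linearMap_comp_eq_zero
  have hS : S.ShortExact := ModuleCat.shortComplex_shortExact S huv hu hv
  have hf : ¬ IsSplitMono S.f := fun ⟨⟨r, hr⟩⟩ ↦ hnonsplit ⟨r.hom, congrArg ModuleCat.Hom.hom hr⟩
  have : Subsingleton (Abelian.Ext J J 1) := (extSuccLinearEquiv k J J 0).symm.subsingleton
  have : Module.Finite k (Abelian.Ext X₁ J 1) := finite_ext_one_of_finitePresentation X₁ J
  rw [(extSuccLinearEquiv k X₂ J 0).finrank_eq, (extSuccLinearEquiv k X₁ J 0).finrank_eq]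
  exact finrank_ext_one_lt_of_not_isSplitMono (S := S) k hS hf

end Modules

/-- Let `0 → J → X₂ → X₁ → 0` be a non-split short exact sequence of
(finite dimensional) `A`-modules with `Ext¹_A(J, J) = 0`. Then
`dim Ext¹_A(X₁, J) > dim Ext¹_A(X₂, J)`. -/
theorem ext1_dim_drop
    (k A : Type) [Field k] [Ring A] [Algebra k A] [FiniteDimensional k A]
    (J X₁ X₂ : ModuleCat.{0} Aᵐᵒᵖ)
    [Module.Finite Aᵐᵒᵖ J] [Module.Finite Aᵐᵒᵖ X₁] [Module.Finite Aᵐᵒᵖ X₂]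
    (hJ : Subsingleton (rext1 k A J J))
    (u : J →ₗ[Aᵐᵒᵖ] X₂) (v : X₂ →ₗ[Aᵐᵒᵖ] X₁)
    (hu : Function.Injective u) (hv : Function.Surjective v) (huv : Function.Exact u v)
    (hnonsplit : ¬ ∃ r : X₂ →ₗ[Aᵐᵒᵖ] J, r ∘ₗ u = LinearMap.id) :
    Module.finrank k (rext1 k A X₂ J) < Module.finrank k (rext1 k A X₁ J) := by
  let : Module k J := ModuleCat.moduleOfAlgebraModule J
  have : IsScalarTower k Aᵐᵒᵖ J := ModuleCat.isScalarTower_of_algebra_moduleCat J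
  have : Module.Finite k J := .trans Aᵐᵒᵖ J
  have : IsNoetherianRing Aᵐᵒᵖ := IsNoetherianRing.of_finite k Aᵐᵒᵖ
  have : Module.FinitePresentation Aᵐᵒᵖ X₁ := Module.finitePresentation_of_finite Aᵐᵒᵖ X₁
  exact ext1_dim_drop_general J X₁ X₂ hJ u v hu hv huv hnonsplit
end
end
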